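/- arXiv:math/0011181 — 2 statements merged into one kernel-verified Lean document; each statement's English description precedes it below -/
import Mathlib

section
/- Let R = k[x_1,...,x_n] be a polynomial ring over a field k, and let I ⊆ R be an ideal of height h. Then every associated prime of the local cohomology module H^h_I(R) is a minimal prime of I. -/
open MvPolynomial

/-- The height of an ideal: the infimum of the heights (in the prime spectrum) of the
minimal primes over it. -/
noncomputable def idealHeight {R : Type*} [CommRing R] (I : Ideal R) : ℕ∞ :=
  ⨅ p : {p : Ideal R // p ∈ I.minimalPrimes},
    Order.height (⟨p.1, p.2.1.1⟩ : PrimeSpectrum R)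

/-!
`H^h_I(R)` is the filtered colimit of the modules `Ext^h(R/I^t, R)`, and over a Noetherian ring an
associated prime of a filtered colimit is already associated to one of its terms. Since `R` is
Cohen-Macaulay, `I^t` contains a regular sequence `r` of length `h`, and Rees' lemma identifies
`Ext^h(R/I^t, R)` with `Hom(R/I^t, R/(r))`. An associated prime `p` of it therefore contains `I` and
is associated to `R/(r)`; by unmixedness `p` has height at most `h`, the height of `I`, so it is
minimal over `I`.

Unmixedness is again Rees' lemma: a regular sequence in `p` longer than `r` would make
`Hom(R/p, R/(r))`, which is an `Ext(R/p, R)`, vanish. The Cohen-Macaulay property passes from `A` to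
`A[X]` because a prime `P` of `A[X]` over `p` is either `p[X]` or of height one more, and then it
avoids the extensions of all associated primes of `A/(r)`, where `r` is a regular sequence in `p` of
length the height of `p`.
-/

universe w v u

open CategoryTheory Limits Abelian RingTheory.Sequence
open scoped Polynomial

section AssociatedPrimes

variable {R M : Type*} [CommRing R] [AddCommGroup M] [Module R M] {J p : Ideal R}

theorem mem_associatedPrimes_of_mem_associatedPrimes_linearMap_quotient
    (hp : p ∈ associatedPrimes R ((R ⧸ J) →ₗ[R] M)) : p ∈ associatedPrimes R M ∧ J ≤ p := by
  refine ⟨associatedPrimes.subset_of_injective (f := LinearMap.applyₗ (1 : R ⧸ J)) ?_ hp,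
    fun r hr ↦ hp.annihilator_le (Submodule.mem_annihilator.2 fun f _ ↦ ?_)⟩
  · exact fun f g hfg ↦ Submodule.linearMap_qext _ (LinearMap.ext_ring hfg)
  · refine LinearMap.ext fun x ↦ ?_
    rw [LinearMap.smul_apply, ← map_smul, Algebra.smul_def, Ideal.Quotient.algebraMap_eq,
      Ideal.Quotient.eq_zero_iff_mem.2 hr, zero_mul, map_zero, LinearMap.zero_apply]

theorem exists_mem_isSMulRegular_of_forall_associatedPrimes [IsNoetherianRing R]
    [Module.Finite R M] (hJ : ∀ p ∈ associatedPrimes R M, ¬ J ≤ p) :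
    ∃ r ∈ J, IsSMulRegular M r := by
  have hsub : Subsingleton ((R ⧸ J) →ₗ[R] M) := by
    by_contra hne
    rw [not_subsingleton_iff_nontrivial] at hne
    obtain ⟨p, hp⟩ := associatedPrimes.nonempty R ((R ⧸ J) →ₗ[R] M)
    obtain ⟨hpM, hJp⟩ := mem_associatedPrimes_of_mem_associatedPrimes_linearMap_quotient hp
    exact hJ p hpM hJp
  simpa [Ideal.annihilator_quotient] using IsSMulRegular.subsingleton_linearMap_iff.1 hsub

end AssociatedPrimes

section Rees

variable {R : Type u} [CommRing R] [Small.{v} R] {N M : ModuleCat.{v} R} {a : R} {rs : List R}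

variable (N) in
/-- The connecting map of the long exact sequence of `Ext N -` for `0 → M → M → M ⧸ aM → 0`. -/
noncomputable def extConnecting (ha : IsSMulRegular M a) (n : ℕ) :
    Abelian.Ext N (ModuleCat.of R (QuotSMulTop a M)) n →ₗ[R] Abelian.Ext N M (n + 1) :=
  (Ext.bilinearCompOfLinear R N _ M n 1 (n + 1) rfl).flip ha.smulShortComplex_shortExact.extClass

theorem extConnecting_surjective (ha : IsSMulRegular M a) (haN : a ∈ Module.annihilator R N)
    (n : ℕ) : Function.Surjective (extConnecting N ha n) := fun x ↦
  Ext.covariant_sequence_exact₁ N ha.smulShortComplex_shortExact x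
    (congrArg (·.hom x) (Ext.postcomp_smul_id_eq_zero_of_mem_annihilator (M := M) haN (n + 1))) rfl

theorem extConnecting_injective (ha : IsSMulRegular M a) (n : ℕ)
    [hM : Subsingleton (Abelian.Ext N M n)] : Function.Injective (extConnecting N ha n) := by
  refine (injective_iff_map_eq_zero _).2 fun z hz ↦ ?_
  obtain ⟨w, rfl⟩ := Ext.covariant_sequence_exact₃ N ha.smulShortComplex_shortExact z rfl hz
  rw [hM.elim w 0]
  exact Ext.zero_comp ..

theorem subsingleton_ext_of_isWeaklyRegular (hrs : IsWeaklyRegular M rs)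
    (hN : ∀ r ∈ rs, r ∈ Module.annihilator R N) {i : ℕ} (hi : i < rs.length) :
    Subsingleton (Abelian.Ext N M i) := by
  induction rs generalizing M i with
  | nil => simp at hi
  | cons a rs ih =>
    obtain ⟨ha, hrs⟩ := (isWeaklyRegular_cons_iff M a rs).1 hrs
    obtain ⟨haN, hN⟩ := List.forall_mem_cons.1 hN
    cases i with
    | zero =>
      have := ha.linearMap_subsingleton_of_mem_annihilator haN
      exact (Ext.addEquiv₀.trans ModuleCat.homAddEquiv).subsingleton
    | succ i =>
      have := ih (M := .of R (QuotSMulTop a M)) hrs hN (Nat.lt_of_succ_lt_succ hi)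
      exact (extConnecting_surjective ha haN i).subsingleton

theorem nonempty_ext_linearEquiv_of_isWeaklyRegular (hrs : IsWeaklyRegular M rs)
    (hN : ∀ r ∈ rs, r ∈ Module.annihilator R N) :
    Nonempty (Abelian.Ext N M rs.length ≃ₗ[R]
      (N →ₗ[R] M ⧸ (Ideal.ofList rs • ⊤ : Submodule R M))) := by
  induction rs generalizing M with
  | nil =>
    have hbot : (Ideal.ofList ([] : List R) • ⊤ : Submodule R M) = ⊥ := by
      rw [Ideal.ofList_nil, Submodule.bot_smul]
    exact ⟨Ext.linearEquiv₀ ≪≫ₗ ModuleCat.homLinearEquiv ≪≫ₗ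
      (Submodule.quotEquivOfEqBot _ hbot).symm.congrRight⟩
  | cons a rs ih =>
    have : Subsingleton (Abelian.Ext N M rs.length) :=
      subsingleton_ext_of_isWeaklyRegular hrs hN (by simp)
    obtain ⟨ha, hrs⟩ := (isWeaklyRegular_cons_iff M a rs).1 hrs
    obtain ⟨haN, hN⟩ := List.forall_mem_cons.1 hN
    obtain ⟨e⟩ := ih (M := .of R (QuotSMulTop a M)) hrs hN
    let δ := LinearEquiv.ofBijective (extConnecting N ha rs.length)
      ⟨extConnecting_injective ha _, extConnecting_surjective ha haN _⟩
    exact ⟨δ.symm ≪≫ₗ e ≪≫ₗ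
      (Submodule.quotOfListConsSMulTopEquivQuotSMulTopInner M a rs).symm.congrRight⟩

end Rees

theorem isWeaklyRegular_self_concat_iff {A : Type*} [CommRing A] {rs : List A} {r : A} :
    IsWeaklyRegular A (rs ++ [r]) ↔
      IsWeaklyRegular A rs ∧ IsSMulRegular (A ⧸ Ideal.ofList rs) r := by
  have htop : (Ideal.ofList rs • ⊤ : Ideal A) = Ideal.ofList rs := by
    rw [smul_eq_mul, Ideal.mul_top]
  rw [isWeaklyRegular_append_iff, isWeaklyRegular_singleton_iff, htop]

theorem mem_associatedPrimes_of_mem_associatedPrimes_ext_quotient {R : Type u} [CommRing R]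
    {M : ModuleCat.{u} R} {J p : Ideal R} {rs : List R} (hrs : IsWeaklyRegular M rs)
    (hJ : ∀ r ∈ rs, r ∈ J)
    (hp : p ∈ associatedPrimes R (Abelian.Ext (ModuleCat.of R (R ⧸ J)) M rs.length)) :
    p ∈ associatedPrimes R (M ⧸ (Ideal.ofList rs • ⊤ : Submodule R M)) ∧ J ≤ p := by
  obtain ⟨e⟩ := nonempty_ext_linearEquiv_of_isWeaklyRegular (N := .of R (R ⧸ J)) hrs fun r hr ↦ by
    simpa only [Ideal.annihilator_quotient] using hJ r hr
  rw [LinearEquiv.AssociatedPrimes.eq e] at hp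
  exact mem_associatedPrimes_of_mem_associatedPrimes_linearMap_quotient hp

/-- The Cohen-Macaulay property of a ring `A`, meant for Noetherian `A`: every prime `P` contains
a regular sequence of length `height P`. -/
def IsCohenMacaulay (A : Type*) [CommRing A] : Prop :=
  ∀ P : Ideal A, P.IsPrime →
    ∃ rs : List A, (∀ r ∈ rs, r ∈ P) ∧ IsWeaklyRegular A rs ∧ (rs.length : ℕ∞) = P.height

namespace IsCohenMacaulay

section Unmixed

variable {A : Type u} [CommRing A] [IsNoetherianRing A]

theorem height_le_length_of_mem_associatedPrimes (hA : IsCohenMacaulay A) {rs : List A}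
    (hrs : IsWeaklyRegular A rs) {p : Ideal A}
    (hp : p ∈ associatedPrimes A (A ⧸ Ideal.ofList rs)) :
    p.height ≤ rs.length := by
  have hrsp : ∀ r ∈ rs, r ∈ p := fun r hr ↦ by
    refine hp.annihilator_le ?_
    rw [Submodule.annihilator_top, Ideal.annihilator_quotient]
    exact Ideal.subset_span (show r ∈ {x | x ∈ rs} from hr)
  rw [← Ideal.mul_top (Ideal.ofList rs), ← smul_eq_mul] at hp
  obtain ⟨hpp, f, hf⟩ := (isAssociatedPrime_iff_exists_injective_linearMap p _).1 hp
  obtain ⟨ss, hssp, hss, hlen⟩ := hA p hpp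
  by_contra! hlt
  rw [← hlen, Nat.cast_lt] at hlt
  have hann : ∀ ts : List A, (∀ r ∈ ts, r ∈ p) → ∀ r ∈ ts, r ∈ Module.annihilator A (A ⧸ p) :=
    fun ts hts ↦ by simpa only [Ideal.annihilator_quotient] using hts
  have hext : Subsingleton (Abelian.Ext (ModuleCat.of A (A ⧸ p)) (.of A A) rs.length) :=
    subsingleton_ext_of_isWeaklyRegular hss (hann ss hssp) hlt
  obtain ⟨e⟩ := nonempty_ext_linearEquiv_of_isWeaklyRegular (N := .of A (A ⧸ p)) (M := .of A A)
    hrs (hann rs hrsp)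
  have hf0 : f = 0 := e.symm.subsingleton.elim f 0
  subst hf0
  exact hpp.ne_top (Ideal.Quotient.subsingleton_iff.1 ⟨fun _ _ ↦ hf rfl⟩)

theorem exists_isWeaklyRegular_of_le_height (hA : IsCohenMacaulay A) {J : Ideal A} {h : ℕ}
    (hJ : h ≤ J.height) : ∃ rs : List A, (∀ r ∈ rs, r ∈ J) ∧ IsWeaklyRegular A rs ∧
      rs.length = h := by
  induction h with
  | zero => exact ⟨[], by simp, .nil A A, rfl⟩
  | succ h ih =>
    obtain ⟨rs, hrsJ, hrs, rfl⟩ := ih (le_trans (by simp) hJ)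
    obtain ⟨g, hgJ, hg⟩ : ∃ g ∈ J, IsSMulRegular (A ⧸ Ideal.ofList rs) g := by
      refine exists_mem_isSMulRegular_of_forall_associatedPrimes fun p hp hJp ↦ ?_
      have hle : ((rs.length + 1 : ℕ) : ℕ∞) ≤ rs.length :=
        hJ.trans <| (Ideal.height_mono hJp).trans <|
          hA.height_le_length_of_mem_associatedPrimes hrs hp
      exact absurd (Nat.cast_le.1 hle) (by simp)
    exact ⟨rs ++ [g], by simpa [or_imp, forall_and] using ⟨hrsJ, hgJ⟩,
      isWeaklyRegular_self_concat_iff.2 ⟨hrs, hg⟩, by simp⟩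

end Unmixed

end IsCohenMacaulay

section PolynomialHeight

variable {A : Type*} [CommRing A]

theorem comap_C_map_C (p : Ideal A) : (p.map Polynomial.C).comap Polynomial.C = p := by
  ext a
  rw [Ideal.mem_comap, Ideal.mem_map_C_iff]
  refine ⟨fun h ↦ by simpa using h 0, fun h n ↦ ?_⟩
  rw [Polynomial.coeff_C]
  split_ifs <;> simp [h]

variable [IsNoetherianRing A] (p : Ideal A)

theorem height_map_C_of_isPrime [p.IsPrime] : (p.map Polynomial.C).height = p.height := by
  have : (p.map Polynomial.C).IsPrime := Ideal.isPrime_map_C_of_isPrime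
  have : (p.map Polynomial.C).LiesOver p := ⟨(comap_C_map_C p).symm⟩
  simp [Ideal.height_eq_height_add_of_liesOver_of_hasGoingDown p]

theorem height_le_height_add_one_of_isMaximal [p.IsMaximal] (P : Ideal A[X]) [hP : P.IsPrime]
    [P.LiesOver p] : P.height ≤ p.height + 1 := by
  obtain ⟨M, hM, hPM⟩ := Ideal.exists_le_maximal P hP.ne_top
  have hpM : p ≤ M.comap Polynomial.C := (P.over_def p).le.trans (Ideal.comap_mono hPM)
  have : M.LiesOver p := ⟨‹p.IsMaximal›.eq_of_le (Ideal.IsPrime.comap Polynomial.C).ne_top hpM⟩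
  exact (Ideal.height_mono hPM).trans (Polynomial.height_eq_height_add_one p M).le

attribute [local instance] Polynomial.algebra Polynomial.isLocalization in
theorem height_le_height_add_one (P : Ideal A[X]) [P.IsPrime] [P.LiesOver p] :
    P.height ≤ p.height + 1 := by
  have : p.IsPrime := P.over_def p ▸ inferInstance
  let Aₚ := Localization.AtPrime p
  let S := p.primeCompl.map Polynomial.C
  have hdisj : Disjoint (S : Set A[X]) P := by
    refine Set.disjoint_left.mpr ?_
    rintro _ ⟨b, hb, rfl⟩ hbP
    exact hb ((P.over_def p).ge hbP)
  have hmax : (p.map (algebraMap A Aₚ)).IsMaximal := by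
    rw [Localization.AtPrime.map_eq_maximalIdeal]
    exact IsLocalRing.maximalIdeal.isMaximal Aₚ
  have hprime : (P.map (algebraMap A[X] Aₚ[X])).IsPrime :=
    IsLocalization.isPrime_of_isPrime_disjoint S Aₚ[X] P ‹_› hdisj
  have hover : (P.map (algebraMap A[X] Aₚ[X])).LiesOver (p.map (algebraMap A Aₚ)) :=
    IsLocalization.liesOver_of_isPrime_of_disjoint p.primeCompl _ _ hdisj
  have hp : (p.map (algebraMap A Aₚ)).height = p.height :=
    IsLocalization.height_map_of_disjoint p.primeCompl p (disjoint_compl_left ..)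
  have hP : (P.map (algebraMap A[X] Aₚ[X])).height = P.height :=
    IsLocalization.height_map_of_disjoint S P hdisj
  rw [← hp, ← hP]
  exact height_le_height_add_one_of_isMaximal _ _

theorem height_eq_height_add_one_of_map_C_lt {P : Ideal A[X]} [P.IsPrime] [P.LiesOver p]
    (hlt : p.map Polynomial.C < P) : P.height = p.height + 1 := by
  have : p.IsPrime := P.over_def p ▸ inferInstance
  have : (p.map Polynomial.C).IsPrime := Ideal.isPrime_map_C_of_isPrime
  refine (height_le_height_add_one p P).antisymm ?_
  rw [← height_map_C_of_isPrime p]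
  exact Ideal.height_add_one_le_of_lt_of_isPrime hlt

end PolynomialHeight

section PolynomialRegular

variable {A : Type*} [CommRing A] [IsNoetherianRing A] {N : Ideal A}

theorem map_mk_mem_nonZeroDivisors {g : A[X]}
    (hg : ∀ q ∈ associatedPrimes A (A ⧸ N), g ∉ q.map Polynomial.C) :
    g.map (Ideal.Quotient.mk N) ∈ nonZeroDivisors (A ⧸ N)[X] := by
  refine Polynomial.mem_nonZeroDivisors_iff.2 fun a ha ↦ by_contra fun ha0 ↦ ?_
  obtain ⟨q, hq, hqa⟩ := exists_le_isAssociatedPrime_of_isNoetherianRing A a ha0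
  refine hg q hq (Ideal.mem_map_C_iff.2 fun n ↦ hqa ?_)
  rw [Submodule.mem_colon_singleton, Submodule.mem_bot, Algebra.smul_def, mul_comm]
  simpa using congrArg (Polynomial.coeff · n) ha

theorem isSMulRegular_quotient_map_C {g : A[X]}
    (hg : ∀ q ∈ associatedPrimes A (A ⧸ N), g ∉ q.map Polynomial.C) :
    IsSMulRegular (A[X] ⧸ N.map Polynomial.C) g := by
  refine (isSMulRegular_quotient_iff_mem_of_smul_mem _ _).2 fun f hf ↦ ?_
  rw [← Ideal.mk_ker (I := N), ← Polynomial.ker_mapRingHom, RingHom.mem_ker] at hf ⊢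
  rw [smul_eq_mul, map_mul] at hf
  exact (mul_left_mem_nonZeroDivisors_eq_zero_iff (map_mk_mem_nonZeroDivisors hg)).1 hf

theorem exists_mem_isSMulRegular_quotient_map_C {P : Ideal A[X]}
    (hP : ∀ q ∈ associatedPrimes A (A ⧸ N), ¬ P ≤ q.map Polynomial.C) :
    ∃ g ∈ P, IsSMulRegular (A[X] ⧸ N.map Polynomial.C) g := by
  have hnot : ¬ (P : Set A[X]) ⊆
      ⋃ q ∈ associatedPrimes A (A ⧸ N), (q.map Polynomial.C : Ideal A[X]) := by
    rw [Ideal.subset_union_prime_finite (associatedPrimes.finite A (A ⧸ N)) ⊥ ⊥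
      fun q hq _ _ ↦ have := hq.1; Ideal.isPrime_map_C_of_isPrime]
    simpa using hP
  obtain ⟨g, hgP, hg⟩ := Set.not_subset.1 hnot
  exact ⟨g, hgP, isSMulRegular_quotient_map_C (by simpa using hg)⟩

end PolynomialRegular

namespace IsCohenMacaulay

section Permanence

variable {A B : Type*} [CommRing A] [CommRing B]

theorem of_field (K : Type*) [Field K] : IsCohenMacaulay K := fun P hP ↦
  ⟨[], by simp, .nil K K, by simp [(Ideal.eq_bot_or_top P).resolve_right hP.ne_top]⟩

theorem of_ringEquiv (e : A ≃+* B) (hA : IsCohenMacaulay A) : IsCohenMacaulay B := fun P hP ↦ by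
  obtain ⟨rs, hrsP, hrs, hlen⟩ := hA (P.comap e) (Ideal.IsPrime.comap e)
  refine ⟨rs.map e, by simpa using hrsP, (e.toAddEquiv.isWeaklyRegular_congr ?_).1 hrs,
    by rw [List.length_map, hlen, e.height_comap]⟩
  exact List.forall₂_map_right_iff.2 <| List.forall₂_same.2 fun r _ x ↦ by simp

theorem polynomial [IsNoetherianRing A] (hA : IsCohenMacaulay A) : IsCohenMacaulay A[X] := by
  intro P hP
  let p := P.comap Polynomial.C
  have hp : p.IsPrime := Ideal.IsPrime.comap Polynomial.C
  have : P.LiesOver p := ⟨rfl⟩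
  obtain ⟨rs, hrsp, hrs, hlen⟩ := hA p hp
  have hrsP : ∀ r ∈ rs.map Polynomial.C, r ∈ P := by simpa [p] using hrsp
  have hrsX : IsWeaklyRegular A[X] (rs.map Polynomial.C) := IsWeaklyRegular.of_flat (S := A[X]) hrs
  have hpP : p.map Polynomial.C ≤ P := Ideal.map_comap_le
  obtain heq | hlt := hpP.eq_or_lt
  · exact ⟨rs.map Polynomial.C, hrsP, hrsX, by
      rw [List.length_map, hlen, ← heq, height_map_C_of_isPrime]⟩
  have hfin : p.FiniteHeight := ⟨Or.inr (by simp [← hlen])⟩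
  obtain ⟨g, hgP, hg⟩ :
      ∃ g ∈ P, IsSMulRegular (A[X] ⧸ (Ideal.ofList rs).map Polynomial.C) g := by
    refine exists_mem_isSMulRegular_quotient_map_C fun q hq hPq ↦ ?_
    have hpq : p ≤ q := comap_C_map_C q ▸ Ideal.comap_mono hPq
    have hqle : q.height ≤ p.height :=
      hlen ▸ hA.height_le_length_of_mem_associatedPrimes hrs hq
    have := hq.1
    rw [← Ideal.eq_of_le_of_height_le p hpq hqle] at hPq
    exact hlt.not_ge hPq
  rw [Ideal.map_ofList] at hg
  refine ⟨rs.map Polynomial.C ++ [g], by simpa [or_imp, forall_and] using ⟨hrsp, hgP⟩,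
    isWeaklyRegular_self_concat_iff.2 ⟨hrsX, hg⟩, ?_⟩
  rw [height_eq_height_add_one_of_map_C_lt p hlt, ← hlen]
  simp

theorem mvPolynomial [IsNoetherianRing A] (hA : IsCohenMacaulay A) (σ : Type*) [Finite σ] :
    IsCohenMacaulay (MvPolynomial σ A) := by
  induction σ using Finite.induction_empty_option with
  | of_equiv e ih => exact ih.of_ringEquiv (MvPolynomial.renameEquiv A e).toRingEquiv
  | h_empty => exact hA.of_ringEquiv (MvPolynomial.isEmptyAlgEquiv A PEmpty).symm.toRingEquiv
  | h_option ih =>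
    exact ih.polynomial.of_ringEquiv (MvPolynomial.optionEquivLeft A _).symm.toRingEquiv

end Permanence

end IsCohenMacaulay

section ExtComparison

variable {C : Type u} [Category.{v} C] [Abelian C] [HasExt.{w} C] {X : C}
  (P : ProjectiveResolution X) {Y : C}

theorem extMk_zero_degree_eq_zero_iff {f : P.complex.X 0 ⟶ Y} {m : ℕ} (hm : 0 + 1 = m)
    (hf : P.complex.d m 0 ≫ f = 0) : P.extMk f m hm hf = 0 ↔ f = 0 := by
  refine ⟨fun h ↦ ?_, fun h ↦ by subst h; exact P.extMk_zero m hm⟩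
  rw [← P.extEquivCohomologyClass.apply_eq_iff_eq, P.extEquivCohomologyClass_extMk,
    P.extEquivCohomologyClass_zero, CochainComplex.HomComplex.CohomologyClass.mk_eq_zero_iff,
    CochainComplex.HomComplex.Cocycle.toSingleMk_mem_coboundaries_iff _ _ _ _ _ 1 (by lia)] at h
  obtain ⟨g, hg⟩ := h
  have hX : IsZero (P.cochainComplex.X 1) := P.cochainComplex.isZero_of_isStrictlyLE 0 1 (by lia)
  rw [hX.eq_of_src g 0, comp_zero] at hg
  rw [← cancel_epi (P.cochainComplexXIso (-(0 : ℕ)) 0 rfl).hom, ← hg, comp_zero]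

variable (R : Type*) [Ring R] [Linear R C]

theorem smul_extMk {n m : ℕ} (hm : n + 1 = m) (r : R) {f : P.complex.X n ⟶ Y}
    (hf : P.complex.d m n ≫ f = 0) :
    r • P.extMk f m hm hf = P.extMk (r • f) m hm (by simp [hf]) := by
  rw [Ext.smul_eq_comp_mk₀, P.extMk_comp_mk₀]
  simp

variable (Y) (n : ℕ)

/-- The map sending a degree-`n` cocycle of `Hom(P, Y)`, for a projective resolution `P` of `X`, to
its class in `Ext X Y n`. -/
noncomputable def cocyclesToExt :
    LinearMap.ker ((P.complex.linearYonedaObj R Y).sc n).g.hom →ₗ[R] Abelian.Ext X Y n where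
  toFun f := P.extMk (Y := Y) f.1 ((ComplexShape.up ℕ).next n) (by simp) f.2
  map_add' f g := (P.add_extMk (Y := Y) f.1 g.1 _ _ f.2 g.2).symm
  map_smul' r f := (smul_extMk (Y := Y) P R _ r f.2).symm

theorem cocyclesToExt_surjective : Function.Surjective (cocyclesToExt P Y R n) := fun x ↦
  have ⟨f, hf, hx⟩ := P.extMk_surjective x ((ComplexShape.up ℕ).next n) (by simp)
  ⟨⟨f, hf⟩, hx⟩

theorem ker_cocyclesToExt : LinearMap.ker (cocyclesToExt P Y R n) =
    LinearMap.range ((P.complex.linearYonedaObj R Y).sc n).moduleCatToCycles := by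
  ext f
  rw [LinearMap.mem_ker, LinearMap.mem_range]
  simp only [Subtype.ext_iff]
  cases n with
  | zero =>
    have hd : ((P.complex.linearYonedaObj R Y).sc 0).f = 0 :=
      (P.complex.linearYonedaObj R Y).shape ((ComplexShape.up ℕ).prev 0) 0 (by simp)
    have hd' (g) : (((P.complex.linearYonedaObj R Y).sc 0).moduleCatToCycles g).1 = 0 :=
      congrArg (·.hom g) hd
    refine (extMk_zero_degree_eq_zero_iff (Y := Y) P (by simp) f.2).trans ?_
    simp only [hd', exists_const]
    exact eq_comm
  | succ p =>
    exact P.extMk_eq_zero_iff (Y := Y) f.1 _ (by simp) f.2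
      ((ComplexShape.up ℕ).prev (p + 1)) (by simp)

/-- The functors `Ext R C n` computed by projective resolutions, in terms of which local cohomology
is defined, agree with the groups `Abelian.Ext`, for which there are long exact sequences. -/
noncomputable def extLinearEquivAbelianExt [EnoughProjectives C] (X Y : C) (n : ℕ) :
    ((Ext R C n).obj (.op X)).obj Y ≃ₗ[R] Abelian.Ext X Y n :=
  let P := ProjectiveResolution.of X
  (P.isoExt n Y ≪≫ ((P.complex.linearYonedaObj R Y).sc n).moduleCatHomologyIso).toLinearEquiv ≪≫ₗ
    Submodule.quotEquivOfEq _ _ (ker_cocyclesToExt P Y R n).symm ≪≫ₗ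
    (cocyclesToExt P Y R n).quotKerEquivOfSurjective (cocyclesToExt_surjective P Y R n)

end ExtComparison

section LocalCohomology

theorem exists_torsionOf_eq_of_isColimit {R : Type u} [CommRing R] [IsNoetherianRing R]
    {J : Type*} [Category* J] [IsFiltered J] {F : J ⥤ ModuleCat.{v} R}
    [PreservesColimit F (forget (ModuleCat.{v} R))] {c : Cocone F} (hc : IsColimit c) (m : c.pt) :
    ∃ (j : J) (y : F.obj j), Ideal.torsionOf R (F.obj j) y = Ideal.torsionOf R c.pt m := by
  obtain ⟨i, x, hx⟩ := Concrete.isColimit_exists_rep F hc m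
  obtain ⟨_, ⟨j, y, hy, rfl⟩, hmax⟩ := set_has_maximal_iff_noetherian.2 ‹IsNoetherianRing R›
    {a : Ideal R | ∃ (j : J) (y : F.obj j), c.ι.app j y = m ∧ Ideal.torsionOf R (F.obj j) y = a}
    ⟨_, i, x, hx, rfl⟩
  refine ⟨j, y, le_antisymm (fun r (hr : r • y = 0) ↦ ?_) fun r (hr : r • m = 0) ↦ ?_⟩
  · rw [Ideal.mem_torsionOf_iff, ← hy, ← map_smul, hr, map_zero]
  obtain ⟨k, f, g, hfg⟩ := Concrete.isColimit_exists_of_rep_eq F hc (r • y) (0 : F.obj j)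
    (by rw [map_smul, hy, hr, map_zero])
  have hle : Ideal.torsionOf R (F.obj j) y ≤ Ideal.torsionOf R (F.obj k) (F.map f y) :=
    fun s (hs : s • y = 0) ↦ by rw [Ideal.mem_torsionOf_iff, ← map_smul, hs, map_zero]
  have hmem : r ∈ Ideal.torsionOf R (F.obj k) (F.map f y) := by
    rw [Ideal.mem_torsionOf_iff, ← map_smul, hfg, map_zero]
  have hfy : c.ι.app k (F.map f y) = m := by rw [← hy, ← c.w f]; rfl
  rwa [eq_of_le_of_not_lt hle (hmax _ ⟨k, F.map f y, hfy, rfl⟩)]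

theorem exists_mem_associatedPrimes_of_isColimit {R : Type u} [CommRing R] [IsNoetherianRing R]
    {J : Type*} [Category* J] [IsFiltered J] {F : J ⥤ ModuleCat.{v} R}
    [PreservesColimit F (forget (ModuleCat.{v} R))] {c : Cocone F} (hc : IsColimit c)
    {p : Ideal R} (hp : p ∈ associatedPrimes R c.pt) : ∃ j, p ∈ associatedPrimes R (F.obj j) := by
  obtain ⟨hpp, m, rfl⟩ := isAssociatedPrime_iff.1 hp
  obtain ⟨j, y, hy⟩ := exists_torsionOf_eq_of_isColimit hc m
  refine ⟨j, isAssociatedPrime_iff.2 ⟨hpp, y, ?_⟩⟩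
  ext r
  simpa using (SetLike.ext_iff.1 hy r).symm

theorem exists_mem_associatedPrimes_ext_of_mem_associatedPrimes_localCohomology {R : Type u}
    [CommRing R] [IsNoetherianRing R] {I p : Ideal R} {h : ℕ} {M : ModuleCat.{u} R}
    (hp : p ∈ associatedPrimes R ((localCohomology I h).obj M)) :
    ∃ t : ℕ, p ∈ associatedPrimes R (Abelian.Ext (ModuleCat.of R (R ⧸ I ^ t)) M h) := by
  have := localCohomology.hasColimitDiagram.{u, 0} (localCohomology.idealPowersDiagram I) h
  have := preservesSmallestFilteredColimits_of_preservesFilteredColimits (forget (ModuleCat.{u} R))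
  let D := localCohomology.diagram (localCohomology.idealPowersDiagram I) h
  obtain ⟨j, hj⟩ := exists_mem_associatedPrimes_of_isColimit
    (isColimitOfPreserves ((evaluation _ _).obj M) (colimit.isColimit D)) hp
  let e := extLinearEquivAbelianExt R (ModuleCat.of R (R ⧸ I ^ j.unop.unop)) M h
  exact ⟨j.unop.unop, LinearEquiv.AssociatedPrimes.eq e ▸ hj⟩

theorem idealHeight_eq_height {R : Type*} [CommRing R] (I : Ideal R) :
    idealHeight I = I.height := by
  rw [Ideal.height_eq_inf_minimalPrimes, idealHeight, iInf_subtype]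
  exact iInf_congr fun p ↦ iInf_congr fun hp ↦
    (PrimeSpectrum.height_eq_orderHeight ⟨p, hp.1.1⟩).symm

theorem height_le_height_pow {R : Type*} [CommRing R] (I : Ideal R) (t : ℕ) :
    I.height ≤ (I ^ t).height := by
  rw [(I ^ t).height_eq_inf_minimalPrimes]
  exact le_iInf₂ fun p hp ↦ Ideal.height_mono (hp.1.1.le_of_pow_le hp.1.2)

theorem stmt_0_general {R : Type u} [CommRing R] [IsNoetherianRing R] (hR : IsCohenMacaulay R)
    (I : Ideal R) (h : ℕ) (hh : (h : ℕ∞) ≤ idealHeight I) :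
    ∀ p ∈ associatedPrimes R ((localCohomology I h).obj (ModuleCat.of R R)),
      p ∈ I.minimalPrimes := by
  intro p hp
  rw [idealHeight_eq_height] at hh
  obtain ⟨t, ht⟩ := exists_mem_associatedPrimes_ext_of_mem_associatedPrimes_localCohomology hp
  obtain ⟨rs, hrsI, hrs, rfl⟩ :=
    hR.exists_isWeaklyRegular_of_le_height (hh.trans (height_le_height_pow I t))
  obtain ⟨hpA, hIp⟩ := mem_associatedPrimes_of_mem_associatedPrimes_ext_quotient hrs hrsI ht
  have hpp : p.IsPrime := hp.1
  rw [smul_eq_mul, Ideal.mul_top] at hpA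
  have hle : p.height ≤ rs.length := hR.height_le_length_of_mem_associatedPrimes hrs hpA
  have hfin : p.FiniteHeight := ⟨Or.inr (ne_top_of_le_ne_top (by simp) hle)⟩
  exact Ideal.mem_minimalPrimes_of_height_le (hpp.le_of_pow_le hIp) (hle.trans hh)

end LocalCohomology

/-- Every associated prime of the local cohomology module `H^h_I(R)`, where
`R = k[x₁,…,xₙ]` and `h` is the height of `I`, is a minimal prime of `I`. -/
theorem stmt_0 (n : ℕ) (k : Type) [Field k]
    (I : Ideal (MvPolynomial (Fin n) k)) (h : ℕ) (hh : idealHeight I = (h : ℕ∞)) :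
    ∀ p ∈ associatedPrimes (MvPolynomial (Fin n) k)
      ((localCohomology I h).obj (ModuleCat.of (MvPolynomial (Fin n) k) (MvPolynomial (Fin n) k))),
      p ∈ I.minimalPrimes :=
  stmt_0_general ((IsCohenMacaulay.of_field k).mvPolynomial (Fin n)) I h hh.ge
end

section
/- Let M_1 = H^l_{p_α}(R)^{⊕k_1} and M_2 = H^l_{p_α}(R)^{⊕k_2} for a monomial prime p_α of height l and integers k_1, k_2 ≥ 0. The restriction map from the group of Z^n-graded R-module homomorphisms Hom(M_1, M_2) to the space of k-linear maps from (M_1)_α to (M_2)_α is a bijection, compatible with composition. -/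
open MvPolynomial

/-- `a ∈ Ω = {-1,0}^n`. -/
def isOm {n : ℕ} (a : Fin n → ℤ) : Prop := ∀ i, a i = 0 ∨ a i = -1

/-- The face prime ideal `p_a = (xᵢ : a i = -1)`. -/
noncomputable def faceIdeal {n : ℕ} (k : Type*) [CommSemiring k] (a : Fin n → ℤ) :
    Ideal (MvPolynomial (Fin n) k) :=
  Ideal.span (MvPolynomial.X '' {i | a i = -1})

/-- `|a|`, the number of `-1` entries of `a ∈ Ω`. -/
def wt {n : ℕ} (a : Fin n → ℤ) : ℕ := (Finset.univ.filter fun i => a i = -1).card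

/-- The local cohomology module `H^r_I(R)` for `R = k[x₁,…,xₙ]`, as a type. -/
abbrev LC {n : ℕ} (k : Type) [Field k] (I : Ideal (MvPolynomial (Fin n) k)) (r : ℕ) : Type :=
  ((localCohomology I r).obj
    (ModuleCat.of (MvPolynomial (Fin n) k) (MvPolynomial (Fin n) k)))

/-- A family of `k`-subspaces indexed by `ℤⁿ` is a compatible `ℤⁿ`-grading of an
`R = k[x₁,…,xₙ]`-module when multiplication by `xᵢ` raises degrees by `eᵢ`. -/
def GradingCompat {n : ℕ} (k : Type) [Field k] (M : Type*) [AddCommGroup M]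
    [Module (MvPolynomial (Fin n) k) M] [Module k M]
    (g : (Fin n → ℤ) → Submodule k M) : Prop :=
  ∀ (i : Fin n) (d : Fin n → ℤ), ∀ m ∈ g d,
    (MvPolynomial.X i : MvPolynomial (Fin n) k) • m ∈ g (d + Pi.single i 1)

open CategoryTheory Limits Opposite RingTheory.Sequence

universe u v

/-! For a regular sequence `(fᵢ)`, the Koszul resolution of `R ⧸ (fᵢ ^ t)` identifies its top `Ext`
into `Y` with `Y ⧸ (fᵢ ^ t) Y`, and the transition maps from `t` to `t + u` become multiplication
by `(∏ fᵢ) ^ u`. Hence top local cohomology consists of fractions `y / (∏ fᵢ) ^ t`. For variables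
of a polynomial ring, the fractions of monomials form a `k`-basis: the Laurent monomials whose
exponents are negative exactly at the chosen variables. So every graded piece is free of rank at
most one, and a matrix over `k` between degree-`a` pieces extends to a graded homomorphism by acting
on the summands. The extension is unique because any two nonzero degrees `a` and `d` lie above a
common nonzero degree `b`, from which multiplication by a monomial is injective into degree `a`
and onto degree `d`. -/

/-- A chain complex `⋯ → X 1 → X 0` of `R`-modules with an augmentation `ε : X 0 → R`, given by
plain linear maps. That consecutive maps compose to zero is part of `AugComplex.IsResolution`. -/
structure AugComplex (R : Type u) [CommRing R] where
  X : ℕ → ModuleCat.{u} R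
  d : ∀ m, X (m + 1) →ₗ[R] X m
  ε : X 0 →ₗ[R] R

namespace AugComplex

variable {R : Type u} [CommRing R]

section Cone

/-- The term following `X m` in the unaugmented complex: `X (m - 1)`, and the zero module
for `m = 0`. -/
def next (K : AugComplex R) : ℕ → ModuleCat.{u} R
  | 0 => ModuleCat.of R PUnit
  | m + 1 => K.X m

/-- The differential out of `X m`, zero for `m = 0`. -/
def dNext (K : AugComplex R) : ∀ m, K.X m →ₗ[R] K.next m
  | 0 => 0
  | m + 1 => K.d m

/-- The mapping cone of multiplication by `x` on `K`, with terms `K.X m × K.X (m - 1)`. -/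
def cone (x : R) (K : AugComplex R) : AugComplex R where
  X m := ModuleCat.of R (K.X m × K.next m)
  d m := (LinearMap.coprod (K.d m) (x • LinearMap.id)).prod
    (-(K.dNext m ∘ₗ LinearMap.snd R (K.X (m + 1)) (K.X m)))
  ε := K.ε ∘ₗ LinearMap.fst R (K.X 0) (K.next 0)

theorem cone_d_apply (x : R) (K : AugComplex R) (m : ℕ) (z : K.X (m + 1)) (w : K.X m) :
    (cone x K).d m ((z, w) : K.X (m + 1) × K.X m) = (K.d m z + x • w, -K.dNext m w) := rfl

/-- `K` is a resolution of `R ⧸ J` by projective modules. -/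
structure IsResolution (K : AugComplex R) (J : Ideal R) : Prop where
  projective : ∀ m, Module.Projective R (K.X m)
  surjective : Function.Surjective K.ε
  exact_zero : ∀ z, K.ε z ∈ J ↔ z ∈ Set.range (K.d 0)
  exact_succ : ∀ m, Function.Exact (K.d (m + 1)) (K.d m)

variable {K : AugComplex R} {J : Ideal R} {x : R}

theorem IsResolution.d_d (h : IsResolution K J) (m : ℕ) (z : K.X (m + 1 + 1)) :
    K.d m (K.d (m + 1) z) = 0 :=
  (h.exact_succ m).apply_apply_eq_zero z

theorem IsResolution.dNext_d (h : IsResolution K J) (m : ℕ) (z : K.X (m + 1)) :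
    K.dNext m (K.d m z) = 0 := by
  cases m with
  | zero => rfl
  | succ m => exact h.d_d m z

theorem IsResolution.exists_d_eq_of_smul_mem_range (h : IsResolution K J)
    (hx : ∀ r, x * r ∈ J → r ∈ J) {m : ℕ} {w : K.X m} (hw : K.dNext m w = 0)
    (hxw : x • w ∈ Set.range (K.d m)) : ∃ w', K.d m w' = w := by
  cases m with
  | zero =>
    refine (h.exact_zero w).1 (hx _ ?_)
    rw [← smul_eq_mul, ← map_smul]
    exact (h.exact_zero _).2 hxw
  | succ m => exact (h.exact_succ m w).1 hw

theorem IsResolution.cone_ε_mem_iff (h : IsResolution K J) (zw : (cone x K).X 0) :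
    (cone x K).ε zw ∈ Ideal.span {x} ⊔ J ↔ zw ∈ Set.range ((cone x K).d 0) := by
  obtain ⟨z, ⟨⟩⟩ : K.X 0 × PUnit := zw
  refine (Ideal.mem_span_singleton_sup (x := K.ε z)).trans ?_
  constructor
  · rintro ⟨r, b, hb, hrb⟩
    obtain ⟨w, rfl⟩ := h.surjective r
    have hzw : K.ε (z - x • w) ∈ J := by
      rwa [map_sub, map_smul, smul_eq_mul, ← hrb, mul_comm, add_sub_cancel_left]
    obtain ⟨z', hz'⟩ := (h.exact_zero _).1 hzw
    exact ⟨(z', w), Prod.ext (eq_sub_iff_add_eq.1 hz') rfl⟩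
  · rintro ⟨zw, hzw⟩
    obtain ⟨z', w⟩ : K.X 1 × K.X 0 := zw
    obtain rfl : K.d 0 z' + x • w = z := congrArg Prod.fst hzw
    refine ⟨K.ε w, K.ε (K.d 0 z'), (h.exact_zero _).2 ⟨z', rfl⟩, ?_⟩
    rw [map_add, map_smul, smul_eq_mul, mul_comm, add_comm]

theorem IsResolution.exact_cone_d (h : IsResolution K J) (hx : ∀ r, x * r ∈ J → r ∈ J) (m : ℕ) :
    Function.Exact ((cone x K).d (m + 1)) ((cone x K).d m) := by
  intro zw
  obtain ⟨z, w⟩ : K.X (m + 1) × K.X m := zw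
  constructor
  · intro hzw
    have hz : K.d m z + x • w = 0 := congrArg Prod.fst hzw
    have hw : -K.dNext m w = 0 := congrArg Prod.snd hzw
    have hxw : x • w = K.d m (-z) := by rw [map_neg, eq_neg_iff_add_eq_zero, add_comm, hz]
    obtain ⟨w', rfl⟩ := h.exists_d_eq_of_smul_mem_range hx (neg_eq_zero.1 hw) ⟨-z, hxw.symm⟩
    obtain ⟨z', hz'⟩ := (h.exact_succ m (z + x • w')).1 (by rw [map_add, map_smul, hz])
    refine ⟨(z', -w'), (cone_d_apply x K (m + 1) z' (-w')).trans (Prod.ext ?_ ?_)⟩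
    · change K.d (m + 1) z' + x • -w' = z
      rw [hz', smul_neg, add_neg_cancel_right]
    · change -K.d m (-w') = K.d m w'
      rw [map_neg, neg_neg]
  · rintro ⟨zw', hzw⟩
    obtain ⟨z', w'⟩ : K.X (m + 1 + 1) × K.X (m + 1) := zw'
    obtain ⟨rfl, hw⟩ := Prod.mk.inj hzw
    obtain rfl : -K.d m w' = w := hw
    refine (cone_d_apply x K m _ _).trans (Prod.ext ?_ ?_)
    · change K.d m (K.d (m + 1) z' + x • w') + x • -K.d m w' = 0
      rw [map_add, h.d_d, zero_add, map_smul, smul_neg, add_neg_cancel]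
    · change -K.dNext m (-K.d m w') = 0
      rw [map_neg, h.dNext_d, neg_zero, neg_zero]

theorem IsResolution.cone (h : IsResolution K J) (hx : ∀ r, x * r ∈ J → r ∈ J) :
    IsResolution (AugComplex.cone x K) (Ideal.span {x} ⊔ J) where
  projective m := by
    have := h.projective
    have : Module.Projective R (K.next m) := by
      cases m with
      | zero => exact inferInstanceAs (Module.Projective R PUnit.{u + 1})
      | succ m => exact h.projective m
    exact inferInstanceAs (Module.Projective R (K.X m × K.next m))
  surjective := h.surjective.comp Prod.fst_surjective
  exact_zero := h.cone_ε_mem_iff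
  exact_succ := h.exact_cone_d hx

/-- A linear map on `K.X l` is a coboundary if it factors through the differential out of
`K.X l`. -/
def IsCoboundary (K : AugComplex R) {M : Type*} [AddCommGroup M] [Module R M] {l : ℕ}
    (c : K.X l →ₗ[R] M) : Prop :=
  ∃ g : K.next l →ₗ[R] M, g ∘ₗ K.dNext l = c

variable {M : Type*} [AddCommGroup M] [Module R M]

theorem isCoboundary_cone_smulRight_iff {l : ℕ} [Subsingleton (K.X (l + 1))]
    {T : K.X l →ₗ[R] R} (hT : Function.Bijective T) (x : R) (m : M) :
    IsCoboundary (cone x K) (l := l + 1)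
        ((T ∘ₗ LinearMap.snd R (K.X (l + 1)) (K.X l)).smulRight m) ↔
      ∃ m', IsCoboundary K (T.smulRight (m - x • m')) := by
  constructor
  · rintro ⟨g, hg⟩
    let e := LinearEquiv.ofBijective T hT
    let g₁ : K.X l →ₗ[R] M := g ∘ₗ LinearMap.inl R (K.X l) (K.next l)
    let g₂ : K.next l →ₗ[R] M := g ∘ₗ LinearMap.inr R (K.X l) (K.next l)
    refine ⟨g₁ (e.symm 1), -g₂, LinearMap.ext fun w => ?_⟩
    have hg₁ : g₁ w = T w • g₁ (e.symm 1) := by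
      rw [← map_smul, ← map_smul, smul_eq_mul, mul_one]
      exact congrArg g₁ (e.symm_apply_apply w).symm
    have hgw : T w • m = x • g₁ w - g₂ (K.dNext l w) := by
      refine (LinearMap.congr_fun hg ((0, w) : K.X (l + 1) × K.X l)).symm.trans ?_
      rw [← map_smul]
      refine (congrArg g ?_).trans (map_sub g (x • w, 0) (0, K.dNext l w))
      refine (cone_d_apply x K l 0 w).trans (Prod.ext ?_ (zero_sub _).symm)
      change K.d l 0 + x • w = x • w - 0
      rw [map_zero, zero_add, sub_zero]
    rw [LinearMap.smulRight_apply, smul_sub, hgw, hg₁, smul_comm x]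
    change -g₂ (K.dNext l w) = _
    abel
  · rintro ⟨m', g, hg⟩
    refine ⟨(T.smulRight m').coprod (-g), LinearMap.ext fun zw => ?_⟩
    obtain ⟨z, w⟩ : K.X (l + 1) × K.X l := zw
    have hgw : g (K.dNext l w) = T w • (m - x • m') := LinearMap.congr_fun hg w
    change T (K.d l z + x • w) • m' + (-g) (-K.dNext l w) = T w • m
    rw [Subsingleton.elim z 0, map_zero, zero_add, map_smul, smul_eq_mul, mul_comm, mul_smul,
      LinearMap.neg_apply, map_neg, neg_neg, hgw, smul_sub, add_sub_cancel]

/-- A morphism of augmented complexes lifting the identity of `R`. -/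
structure Hom (K' K : AugComplex R) where
  f : ∀ m, K'.X m →ₗ[R] K.X m
  comm : ∀ m z, K.d m (f (m + 1) z) = f m (K'.d m z)
  ε_comp : ∀ z, K.ε (f 0 z) = K'.ε z

namespace Hom

variable {K' : AugComplex R}

/-- The component `K'.X (m - 1) → K.X (m - 1)` of a morphism. -/
def next (φ : Hom K' K) : ∀ m, K'.next m →ₗ[R] K.next m
  | 0 => LinearMap.id
  | m + 1 => φ.f m

theorem dNext_comm (φ : Hom K' K) (m : ℕ) (z : K'.X m) :
    K.dNext m (φ.f m z) = φ.next m (K'.dNext m z) := by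
  cases m with
  | zero => rfl
  | succ m => exact φ.comm m z

/-- The morphism from the cone of `x'` to the cone of a divisor `x` of `x' = x * y`; it multiplies
the shifted copy of `K'` by `y`. -/
def cone (φ : Hom K' K) {x x' y : R} (h : x' = x * y) :
    Hom (AugComplex.cone x' K') (AugComplex.cone x K) where
  f m := (φ.f m).prodMap (y • φ.next m)
  comm m zw := by
    obtain ⟨z, w⟩ : K'.X (m + 1) × K'.X m := zw
    refine Prod.ext ?_ ?_
    · change K.d m (φ.f (m + 1) z) + x • y • φ.f m w = φ.f m (K'.d m z + x' • w)
      rw [φ.comm, map_add, map_smul, h, mul_smul]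
    · change -K.dNext m (y • φ.f m w) = y • φ.next m (-K'.dNext m w)
      rw [map_smul, φ.dNext_comm, map_neg, smul_neg]
  ε_comp z := φ.ε_comp z.1

end Hom

end Cone

section Koszul

variable {ι : Type*} (f : ι → R)

/-- The Koszul complex of the elements `f i`, `i ∈ s`, as an iterated cone. -/
def koszul : List ι → AugComplex R
  | [] =>
    { X := fun m => match m with
        | 0 => ModuleCat.of R R
        | _ + 1 => ModuleCat.of R PUnit
      d := fun _ => 0
      ε := LinearMap.id }
  | i :: s => cone (f i) (koszul s)

/-- The identification of the top term of the Koszul complex with `R`. -/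
def koszulTop : ∀ s : List ι, (koszul f s).X s.length →ₗ[R] R
  | [] => LinearMap.id
  | _ :: s => koszulTop s ∘ₗ
      LinearMap.snd R ((koszul f s).X (s.length + 1)) ((koszul f s).X s.length)

theorem subsingleton_koszul {s : List ι} {m : ℕ} (h : s.length < m) :
    Subsingleton ((koszul f s).X m) := by
  induction s generalizing m with
  | nil =>
    obtain ⟨m, rfl⟩ := Nat.exists_eq_succ_of_ne_zero h.ne'
    exact inferInstanceAs (Subsingleton PUnit)
  | cons i s ih =>
    obtain ⟨m, rfl⟩ := Nat.exists_eq_succ_of_ne_zero h.ne_bot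
    have := ih (Nat.lt_of_succ_lt h)
    have := ih (Nat.lt_of_succ_lt_succ h)
    exact inferInstanceAs
      (Subsingleton ((koszul f s).X (m + 1) × (koszul f s).X m))

theorem koszulTop_bijective (s : List ι) : Function.Bijective (koszulTop f s) := by
  induction s with
  | nil => exact Function.bijective_id
  | cons i s ih =>
    have := subsingleton_koszul f (Nat.lt_succ_self s.length)
    refine ih.comp ⟨?_, Prod.snd_surjective⟩
    rintro ⟨z, w⟩ ⟨z', w'⟩ h
    exact Prod.ext (Subsingleton.elim z z') h

theorem isCoboundary_koszulTop_iff {M : Type*} [AddCommGroup M] [Module R M] (s : List ι) (m : M) :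
    IsCoboundary (koszul f s) ((koszulTop f s).smulRight m) ↔
      m ∈ Ideal.ofList (s.map f) • (⊤ : Submodule R M) := by
  induction s generalizing m with
  | nil =>
    rw [List.map_nil, Ideal.ofList_nil, Submodule.bot_smul, Submodule.mem_bot]
    constructor
    · rintro ⟨g, hg⟩
      have h1 := LinearMap.congr_fun hg (1 : R)
      exact (one_smul R m).symm.trans (h1.symm.trans (map_zero g))
    · rintro rfl
      exact ⟨0, LinearMap.ext fun w => (smul_zero _).symm⟩
  | cons i s ih =>
    have := subsingleton_koszul f (Nat.lt_succ_self s.length)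
    refine (isCoboundary_cone_smulRight_iff (koszulTop_bijective f s) (f i) m).trans ?_
    rw [List.map_cons, Ideal.ofList_cons_smul, Submodule.mem_sup]
    simp_rw [ih, Submodule.mem_smul_pointwise_iff_exists]
    constructor
    · rintro ⟨m', hm'⟩
      exact ⟨_, ⟨m', trivial, rfl⟩, _, hm', add_sub_cancel _ _⟩
    · rintro ⟨_, ⟨m', -, rfl⟩, b, hb, rfl⟩
      exact ⟨m', by rwa [add_sub_cancel_left]⟩

theorem isResolution_koszul {s : List ι} (h : IsWeaklyRegular R (s.map f).reverse) :
    IsResolution (koszul f s) (Ideal.ofList (s.map f)) := by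
  induction s with
  | nil =>
    refine ⟨?_, Function.surjective_id, fun r => ?_, fun m _ => ?_⟩
    · rintro (_ | m)
      · exact inferInstanceAs (Module.Projective R R)
      · exact inferInstanceAs (Module.Projective R PUnit.{u + 1})
    · rw [List.map_nil, Ideal.ofList_nil, Ideal.mem_bot]
      exact ⟨fun h => ⟨PUnit.unit, h.symm⟩, fun ⟨_, h⟩ => h.symm⟩
    · exact ⟨fun _ => ⟨PUnit.unit, rfl⟩, fun _ => rfl⟩
  | cons i s ih =>
    rw [List.map_cons, List.reverse_cons, isWeaklyRegular_append_iff,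
      isWeaklyRegular_singleton_iff, isSMulRegular_quotient_iff_mem_of_smul_mem] at h
    obtain ⟨hs, hi⟩ := h
    simp only [smul_eq_mul, Ideal.mul_top, Ideal.ofList, List.mem_reverse] at hi
    rw [List.map_cons, Ideal.ofList_cons]
    exact (ih hs).cone hi

variable {f}

/-- The morphism of Koszul complexes attached to a factorisation `f' i = f i * g i`. -/
def koszulHom {f' g : ι → R} (h : ∀ i, f' i = f i * g i) :
    ∀ s : List ι, Hom (koszul f' s) (koszul f s)
  | [] => ⟨fun _ => LinearMap.id, fun _ _ => rfl, fun _ => rfl⟩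
  | i :: s => (koszulHom h s).cone (h i)

theorem koszulTop_koszulHom {f' g : ι → R} (h : ∀ i, f' i = f i * g i) (s : List ι)
    (z : (koszul f' s).X s.length) :
    koszulTop f s ((koszulHom h s).f s.length z) = (s.map g).prod * koszulTop f' s z := by
  induction s with
  | nil => exact (one_mul _).symm
  | cons i s ih =>
    obtain ⟨-, w⟩ : (koszul f' s).X (s.length + 1) × (koszul f' s).X s.length := z
    change koszulTop f s (g i • (koszulHom h s).f s.length w) = _ * koszulTop f' s w
    rw [map_smul, ih, smul_eq_mul, List.map_cons, List.prod_cons, mul_assoc]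

end Koszul
end AugComplex

section HomologyTop

variable {D : Type*} [Category D] [Abelian D] {K K' : ChainComplex D ℕ} {l : ℕ}

/-- The inclusion `H_l(K) ⟶ K_l` of the homology in a degree with zero incoming differential. -/
noncomputable def homologyToX (h : K.d (l + 1) l = 0) : K.homology l ⟶ K.X l :=
  (K.isoHomologyπ (l + 1) l (by simp) h).inv ≫ K.iCycles l

instance mono_homologyToX (h : K.d (l + 1) l = 0) : Mono (homologyToX h) :=
  mono_comp _ _

theorem homologyToX_naturality (h : K.d (l + 1) l = 0) (h' : K'.d (l + 1) l = 0) (φ : K ⟶ K') :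
    HomologicalComplex.homologyMap φ l ≫ homologyToX h' = homologyToX h ≫ φ.f l := by
  rw [homologyToX, homologyToX, Category.assoc, Iso.eq_inv_comp,
    HomologicalComplex.isoHomologyπ_hom, HomologicalComplex.homologyπ_naturality_assoc,
    HomologicalComplex.isoHomologyπ_hom_inv_id_assoc, HomologicalComplex.cyclesMap_i]

theorem homologyToX_comp_d (h : K.d (l + 1) l = 0) (m : ℕ) : homologyToX h ≫ K.d l m = 0 := by
  rw [homologyToX, Category.assoc, HomologicalComplex.iCycles_d, comp_zero]

theorem exact_homologyToX (h : K.d (l + 1) l = 0) :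
    (ShortComplex.mk _ _ (homologyToX_comp_d h ((ComplexShape.down ℕ).next l))).Exact := by
  refine ShortComplex.exact_of_f_is_kernel _ ?_
  refine IsLimit.ofIsoLimit (K.cyclesIsKernel l _ rfl)
    (Fork.ext (K.isoHomologyπ (l + 1) l (by simp) h) ?_)
  exact Iso.hom_inv_id_assoc _ _

end HomologyTop

section LeftDerivedTop

variable {C D : Type*} [Category C] [Abelian C] [Category D] [Abelian D] (F : C ⥤ D) [F.Additive]
  {X X' : C} (P : ProjectiveResolution X) (P' : ProjectiveResolution X') {l : ℕ}

theorem mapHomologicalComplex_d_eq_zero {K : ChainComplex C ℕ} (h : K.d (l + 1) l = 0) :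
    ((F.mapHomologicalComplex _).obj K).d (l + 1) l = 0 :=
  (congrArg F.map h).trans (F.map_zero _ _)

variable [HasProjectiveResolutions C]

/-- The left derived functor computed by a projective resolution, stated with
`HomologicalComplex.homology` instead of the homology functor. -/
noncomputable def leftDerivedIsoHomology (l : ℕ) :
    (F.leftDerived l).obj X ≅ ((F.mapHomologicalComplex _).obj P.complex).homology l :=
  P.isoLeftDerivedObj F l

variable {P'} in
theorem leftDerivedIsoHomology_naturality {f : X ⟶ X'} {φ : P.complex ⟶ P'.complex}
    (comm : φ.f 0 ≫ P'.π.f 0 = P.π.f 0 ≫ f) :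
    (F.leftDerived l).map f ≫ (leftDerivedIsoHomology F P' l).hom =
      (leftDerivedIsoHomology F P l).hom ≫
        HomologicalComplex.homologyMap ((F.mapHomologicalComplex _).map φ) l :=
  P.isoLeftDerivedObj_hom_naturality f P' φ comm F l

/-- For a projective resolution `P` of `X` with zero differential into degree `l`, the inclusion
of the `l`-th left derived functor of `F` into `F (P l)`. -/
noncomputable def leftDerivedToX (h : P.complex.d (l + 1) l = 0) :
    (F.leftDerived l).obj X ⟶ ((F.mapHomologicalComplex _).obj P.complex).X l :=
  (leftDerivedIsoHomology F P l).hom ≫ homologyToX (mapHomologicalComplex_d_eq_zero F h)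

instance mono_leftDerivedToX (h : P.complex.d (l + 1) l = 0) : Mono (leftDerivedToX F P h) :=
  mono_comp _ _

variable {P'} in
theorem leftDerivedToX_naturality (h : P.complex.d (l + 1) l = 0)
    (h' : P'.complex.d (l + 1) l = 0) {f : X ⟶ X'} {φ : P.complex ⟶ P'.complex}
    (comm : φ.f 0 ≫ P'.π.f 0 = P.π.f 0 ≫ f) :
    (F.leftDerived l).map f ≫ leftDerivedToX F P' h' =
      leftDerivedToX F P h ≫ ((F.mapHomologicalComplex _).map φ).f l := by
  rw [leftDerivedToX, leftDerivedToX, Category.assoc, ← homologyToX_naturality,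
    ← Category.assoc, leftDerivedIsoHomology_naturality F P comm, Category.assoc]

theorem leftDerivedToX_comp_d (h : P.complex.d (l + 1) l = 0) (m : ℕ) :
    leftDerivedToX F P h ≫ ((F.mapHomologicalComplex _).obj P.complex).d l m = 0 := by
  rw [leftDerivedToX, Category.assoc, homologyToX_comp_d, comp_zero]

theorem exact_leftDerivedToX (h : P.complex.d (l + 1) l = 0) :
    (ShortComplex.mk _ _
      (leftDerivedToX_comp_d F P h ((ComplexShape.down ℕ).next l))).Exact := by
  refine (ShortComplex.exact_iff_of_iso ?_).1
    (exact_homologyToX (mapHomologicalComplex_d_eq_zero F h))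
  refine ShortComplex.isoMk (leftDerivedIsoHomology F P l).symm (Iso.refl _) (Iso.refl _) ?_
    ((Category.id_comp _).trans (Category.comp_id _).symm)
  exact (Iso.inv_hom_id_assoc _ _).trans (Category.comp_id _).symm

end LeftDerivedTop

section ExtTop

variable {R : Type u} [CommRing R] {X X' : ModuleCat.{u} R} (P : ProjectiveResolution X)
  (P' : ProjectiveResolution X') {l : ℕ} (Y : ModuleCat.{u} R)

/-- For a projective resolution `P` of `X` with zero differential into degree `l`, the map sending
a morphism `P l ⟶ Y` to its class in `Extˡ(X, Y)`. -/
noncomputable def cochainToExt (h : P.complex.d (l + 1) l = 0) :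
    (P.complex.X l ⟶ Y) →ₗ[R] ((Ext R (ModuleCat.{u} R) l).obj (op X)).obj Y :=
  (leftDerivedToX ((linearYoneda R (ModuleCat.{u} R)).obj Y).rightOp P h).unop.hom

theorem cochainToExt_surjective (h : P.complex.d (l + 1) l = 0) :
    Function.Surjective (cochainToExt P Y h) :=
  (ModuleCat.epi_iff_surjective _).1
    (unop_epi_of_mono (leftDerivedToX ((linearYoneda R (ModuleCat.{u} R)).obj Y).rightOp P h))

theorem map_cochainToExt (h : P.complex.d (l + 1) l = 0) (h' : P'.complex.d (l + 1) l = 0)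
    (f : X ⟶ X') (φ : P.complex ⟶ P'.complex) (comm : φ.f 0 ≫ P'.π.f 0 = P.π.f 0 ≫ f)
    (c : P'.complex.X l ⟶ Y) :
    ((Ext R (ModuleCat.{u} R) l).map f.op).app Y (cochainToExt P' Y h' c) =
      cochainToExt P Y h (φ.f l ≫ c) :=
  ConcreteCategory.congr_hom (congrArg Quiver.Hom.unop
    (leftDerivedToX_naturality ((linearYoneda R (ModuleCat.{u} R)).obj Y).rightOp
      P h h' comm)) c

theorem cochainToExt_eq_zero_iff (h : P.complex.d (l + 1) l = 0) (c : P.complex.X l ⟶ Y) :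
    cochainToExt P Y h c = 0 ↔ ∃ g, P.complex.d l ((ComplexShape.down ℕ).next l) ≫ g = c := by
  have hexact := (exact_leftDerivedToX ((linearYoneda R (ModuleCat.{u} R)).obj Y).rightOp P h).unop
  exact ((ShortComplex.ShortExact.moduleCat_exact_iff_function_exact _).1 hexact) c

end ExtTop

namespace AugComplex

section Ext

variable {R : Type u} [CommRing R] {K K' : AugComplex R} {J J' : Ideal R}

namespace IsResolution

/-- The chain complex underlying a resolution. -/
noncomputable def chainComplex (h : IsResolution K J) : ChainComplex (ModuleCat.{u} R) ℕ :=
  ChainComplex.of K.X (fun m => ModuleCat.ofHom (K.d m)) fun m => by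
    ext z
    exact h.d_d m z

theorem chainComplex_d (h : IsResolution K J) (m : ℕ) :
    h.chainComplex.d (m + 1) m = ModuleCat.ofHom (K.d m) :=
  ChainComplex.of_d K.X (fun m => ModuleCat.ofHom (K.d m)) m

/-- The augmentation `K → R ⧸ J` in degree zero. -/
def augmentation (_ : IsResolution K J) : K.X 0 ⟶ ModuleCat.of R (R ⧸ J) :=
  ModuleCat.ofHom (J.mkQ ∘ₗ K.ε)

theorem d_comp_augmentation (h : IsResolution K J) :
    ModuleCat.ofHom (K.d 0) ≫ h.augmentation = 0 := by
  ext z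
  exact (Submodule.Quotient.mk_eq_zero J).2 ((h.exact_zero _).2 ⟨z, rfl⟩)

theorem exact_augmentation (h : IsResolution K J) :
    (ShortComplex.mk _ _ h.d_comp_augmentation).Exact := by
  rw [ShortComplex.moduleCat_exact_iff]
  intro z hz
  exact (h.exact_zero z).1 ((Submodule.Quotient.mk_eq_zero J).1 hz)

theorem exactAt_succ (h : IsResolution K J) (m : ℕ) : h.chainComplex.ExactAt (m + 1) := by
  rw [HomologicalComplex.exactAt_iff' _ (m + 1 + 1) (m + 1) m (by simp) (by simp),
    ShortComplex.ShortExact.moduleCat_exact_iff_function_exact]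
  change Function.Exact (h.chainComplex.d (m + 1 + 1) (m + 1)) (h.chainComplex.d (m + 1) m)
  rw [h.chainComplex_d, h.chainComplex_d]
  exact h.exact_succ m

/-- The augmentation as a chain map to `R ⧸ J` concentrated in degree zero. -/
noncomputable def toSingle (h : IsResolution K J) :
    h.chainComplex ⟶ (ChainComplex.single₀ _).obj (ModuleCat.of R (R ⧸ J)) :=
  (ChainComplex.toSingle₀Equiv _ _).symm
    ⟨h.augmentation, by rw [chainComplex_d]; exact h.d_comp_augmentation⟩

theorem toSingle_f_zero (h : IsResolution K J) : h.toSingle.f 0 = h.augmentation :=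
  ChainComplex.toSingle₀Equiv_symm_apply_f_zero _ _

theorem quasiIso_toSingle (h : IsResolution K J) : QuasiIso h.toSingle where
  quasiIsoAt m := by
    cases m with
    | zero =>
      rw [ChainComplex.quasiIsoAt₀_iff, ShortComplex.quasiIso_iff_of_zeros' _ rfl rfl rfl]
      refine (ShortComplex.exact_and_epi_g_iff_of_iso ?_).2 ⟨h.exact_augmentation, ?_⟩
      · refine ShortComplex.isoMk (Iso.refl _) (Iso.refl _) (Iso.refl _) ?_ ?_
        · exact (Category.id_comp _).trans
            ((h.chainComplex_d 0).symm.trans (Category.comp_id _).symm)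
        · exact (Category.id_comp _).trans (h.toSingle_f_zero.symm.trans (Category.comp_id _).symm)
      · rw [ModuleCat.epi_iff_surjective]
        exact J.mkQ_surjective.comp h.surjective
    | succ m =>
      rw [quasiIsoAt_iff_exactAt' _ _ (ChainComplex.exactAt_succ_single_obj _ _)]
      exact h.exactAt_succ m

/-- A resolution of `R ⧸ J` by linear maps as a `ProjectiveResolution`. -/
noncomputable def projectiveResolution (h : IsResolution K J) :
    ProjectiveResolution (ModuleCat.of R (R ⧸ J)) where
  complex := h.chainComplex
  projective m :=
    have := h.projective m
    inferInstanceAs (Projective (K.X m))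
  π := h.toSingle
  quasiIso := h.quasiIso_toSingle

/-- The chain map induced by a morphism of resolutions. -/
noncomputable def chainMap (h : IsResolution K J) (h' : IsResolution K' J') (φ : Hom K' K) :
    h'.chainComplex ⟶ h.chainComplex :=
  ChainComplex.ofHom (fun m => ModuleCat.ofHom (φ.f m)) fun m => by
    rw [h.chainComplex_d, h'.chainComplex_d]
    ext z
    exact φ.comm m z

theorem chainMap_comp_augmentation (h : IsResolution K J) (h' : IsResolution K' J')
    (φ : Hom K' K) (hJ : J' ≤ J) :
    (h.chainMap h' φ).f 0 ≫ h.toSingle.f 0 =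
      h'.toSingle.f 0 ≫ ModuleCat.ofHom (Submodule.factor hJ) := by
  rw [toSingle_f_zero, toSingle_f_zero]
  ext z
  exact congrArg J.mkQ (φ.ε_comp z)

variable {l : ℕ}

theorem projectiveResolution_d_eq_zero (h : IsResolution K J) [Subsingleton (K.X (l + 1))] :
    h.projectiveResolution.complex.d (l + 1) l = 0 := by
  refine (h.chainComplex_d l).trans ?_
  ext z
  rw [Subsingleton.elim z 0, map_zero, map_zero]

variable (Y : ModuleCat.{u} R)

/-- The map from `l`-cochains with values in `Y` to `Extˡ(R ⧸ J, Y)`, for a resolution of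
length `l`. -/
noncomputable def toExt (h : IsResolution K J) [Subsingleton (K.X (l + 1))] :
    (K.X l →ₗ[R] Y) →ₗ[R]
      ((Ext R (ModuleCat.{u} R) l).obj (op (ModuleCat.of R (R ⧸ J)))).obj Y :=
  cochainToExt h.projectiveResolution Y h.projectiveResolution_d_eq_zero ∘ₗ
    (ModuleCat.homLinearEquiv (S := R)).symm.toLinearMap

theorem toExt_surjective (h : IsResolution K J) [Subsingleton (K.X (l + 1))] :
    Function.Surjective (h.toExt Y (l := l)) := by
  intro z
  obtain ⟨c, rfl⟩ :=
    cochainToExt_surjective h.projectiveResolution Y h.projectiveResolution_d_eq_zero z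
  exact ⟨c.hom, rfl⟩

theorem exists_d_comp_eq_iff_isCoboundary (h : IsResolution K J) {m : ℕ}
    (hm : (ComplexShape.down ℕ).next l = m) (c : K.X l →ₗ[R] Y) :
    (∃ g : K.X m ⟶ Y, h.chainComplex.d l m ≫ g = ModuleCat.ofHom c) ↔ IsCoboundary K c := by
  cases l with
  | zero =>
    rw [h.chainComplex.shape 0 m (by simp)]
    constructor
    · rintro ⟨g, hg⟩
      exact ⟨0, congrArg ModuleCat.Hom.hom (zero_comp.symm.trans hg)⟩
    · rintro ⟨g, rfl⟩
      refine ⟨0, zero_comp.trans (ModuleCat.hom_ext (LinearMap.ext fun _ => ?_))⟩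
      exact (map_zero g).symm
  | succ l =>
    obtain rfl : m = l := by rw [← hm]; simp
    rw [chainComplex_d]
    constructor
    · rintro ⟨g, hg⟩
      exact ⟨g.hom, congrArg ModuleCat.Hom.hom hg⟩
    · rintro ⟨g, rfl⟩
      exact ⟨ModuleCat.ofHom g, rfl⟩

theorem toExt_eq_zero_iff (h : IsResolution K J) [Subsingleton (K.X (l + 1))]
    (c : K.X l →ₗ[R] Y) : h.toExt Y c = 0 ↔ IsCoboundary K c :=
  (cochainToExt_eq_zero_iff h.projectiveResolution Y h.projectiveResolution_d_eq_zero
    (ModuleCat.ofHom c)).trans (h.exists_d_comp_eq_iff_isCoboundary Y rfl c)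

theorem map_toExt (h : IsResolution K J) (h' : IsResolution K' J') (φ : Hom K' K) (hJ : J' ≤ J)
    [Subsingleton (K.X (l + 1))] [Subsingleton (K'.X (l + 1))] (c : K.X l →ₗ[R] Y) :
    ((Ext R (ModuleCat.{u} R) l).map (ModuleCat.ofHom (Submodule.factor hJ)).op).app Y
      (h.toExt Y c) = h'.toExt Y (c ∘ₗ φ.f l) :=
  map_cochainToExt h'.projectiveResolution h.projectiveResolution Y
    h'.projectiveResolution_d_eq_zero h.projectiveResolution_d_eq_zero
    (ModuleCat.ofHom (Submodule.factor hJ)) (h.chainMap h' φ)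
    (h.chainMap_comp_augmentation h' φ hJ) (ModuleCat.ofHom c)

end IsResolution

variable {ι : Type*} {f f' g : ι → R} {s : List ι}

/-- The class in `Extˡ(R ⧸ (f i)_{i ∈ s}, Y)` of the top Koszul cochain with value `y`. -/
noncomputable def koszulExt (h : IsWeaklyRegular R (s.map f).reverse) (Y : ModuleCat.{u} R) :
    Y →ₗ[R] ((Ext R (ModuleCat.{u} R) s.length).obj
      (op (ModuleCat.of R (R ⧸ Ideal.ofList (s.map f))))).obj Y :=
  have := subsingleton_koszul f (Nat.lt_succ_self s.length)
  (isResolution_koszul f h).toExt Y ∘ₗ LinearMap.smulRightₗ (koszulTop f s)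

theorem koszulExt_surjective (h : IsWeaklyRegular R (s.map f).reverse) (Y : ModuleCat.{u} R) :
    Function.Surjective (koszulExt h Y) := by
  have := subsingleton_koszul f (Nat.lt_succ_self s.length)
  refine ((isResolution_koszul f h).toExt_surjective Y).comp fun c => ?_
  obtain ⟨w, hw⟩ := (koszulTop_bijective f s).2 1
  refine ⟨c w, LinearMap.ext fun z => ?_⟩
  have hz : koszulTop f s z • w = z := by
    apply (koszulTop_bijective f s).1
    rw [map_smul, hw, smul_eq_mul, mul_one]
  change koszulTop f s z • c w = c z
  rw [← map_smul, hz]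

theorem koszulExt_eq_zero_iff (h : IsWeaklyRegular R (s.map f).reverse) (Y : ModuleCat.{u} R)
    (y : Y) : koszulExt h Y y = 0 ↔ y ∈ Ideal.ofList (s.map f) • (⊤ : Submodule R Y) := by
  have := subsingleton_koszul f (Nat.lt_succ_self s.length)
  exact ((isResolution_koszul f h).toExt_eq_zero_iff Y _).trans (isCoboundary_koszulTop_iff f s y)

theorem map_koszulExt (h : IsWeaklyRegular R (s.map f).reverse)
    (h' : IsWeaklyRegular R (s.map f').reverse) (hfg : ∀ i, f' i = f i * g i)
    (hJ : Ideal.ofList (s.map f') ≤ Ideal.ofList (s.map f)) (Y : ModuleCat.{u} R) (y : Y) :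
    ((Ext R (ModuleCat.{u} R) s.length).map (ModuleCat.ofHom (Submodule.factor hJ)).op).app Y
      (koszulExt h Y y) = koszulExt h' Y ((s.map g).prod • y) := by
  have := subsingleton_koszul f (Nat.lt_succ_self s.length)
  have := subsingleton_koszul f' (Nat.lt_succ_self s.length)
  refine ((isResolution_koszul f h).map_toExt Y (isResolution_koszul f' h') (koszulHom hfg s) hJ
    ((koszulTop f s).smulRight y)).trans (congrArg _ (LinearMap.ext fun z => ?_))
  change koszulTop f s _ • y = koszulTop f' s z • (s.map g).prod • y
  rw [koszulTop_koszulHom, mul_comm, mul_smul]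

end Ext

end AugComplex

section Fractions

variable {R : Type u} [CommRing R] {ι : Type*}

/-- `frac t m` is the fraction `m / (∏ f i)ᵗ` in a presentation of `H` as the colimit of the
quotients `M / (f i ^ t)_{i ∈ s} M`, with multiplication by `∏ f i` as transition maps: the shape of
top local cohomology with support in `(f i)_{i ∈ s}`. -/
structure IsFractionSystem (f : ι → R) (s : List ι) {M H : Type*} [AddCommGroup M] [Module R M]
    [AddCommGroup H] [Module R H] (frac : ℕ → M →ₗ[R] H) : Prop where
  exists_eq (z : H) : ∃ t m, frac t m = z
  add_smul (t u : ℕ) (m : M) : frac (t + u) ((s.map f).prod ^ u • m) = frac t m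
  eq_zero_iff (t : ℕ) (m : M) : frac t m = 0 ↔
    ∃ u, (s.map f).prod ^ u • m ∈ Ideal.ofList (s.map (f ^ (t + u))) • (⊤ : Submodule R M)

variable (f : ι → R) (s : List ι)

theorem antitone_ofList_pow : Antitone fun t => Ideal.ofList (s.map (f ^ t)) := by
  intro t u htu
  refine Ideal.span_le.2 fun x hx => ?_
  obtain ⟨i, hi, rfl⟩ := List.mem_map.1 hx
  exact Ideal.mem_of_dvd _ (pow_dvd_pow (f i) htu)
    (Ideal.subset_span (List.mem_map_of_mem (f := f ^ t) hi))

theorem ofList_le_radical_ofList_pow (t : ℕ) :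
    Ideal.ofList (s.map f) ≤ (Ideal.ofList (s.map (f ^ t))).radical := by
  refine Ideal.span_le.2 fun x hx => ?_
  obtain ⟨i, hi, rfl⟩ := List.mem_map.1 hx
  exact ⟨t, Ideal.subset_span (List.mem_map_of_mem (f := f ^ t) hi)⟩

theorem ofList_pow_le_pow_ofList (t : ℕ) :
    Ideal.ofList (s.map (f ^ t)) ≤ Ideal.ofList (s.map f) ^ t := by
  refine Ideal.span_le.2 fun x hx => ?_
  obtain ⟨i, hi, rfl⟩ := List.mem_map.1 hx
  exact Ideal.pow_mem_pow (I := Ideal.ofList (s.map f))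
    (Ideal.subset_span (List.mem_map_of_mem hi)) t

/-- The ideals generated by the `t`-th powers of the `f i`, as a diagram for
`localCohomology.ofDiagram`. -/
def powersDiagram : ℕᵒᵖ ⥤ Ideal R where
  obj t := Ideal.ofList (s.map (f ^ unop t))
  map w := ⟨⟨antitone_ofList_pow f s w.unop.down.down⟩⟩

/-- `powersDiagram` inside the diagram of all ideals whose radical contains every `f i`. -/
def powersToSelfLERadical :
    ℕᵒᵖ ⥤ localCohomology.SelfLERadical (Ideal.ofList (s.map f)) :=
  ObjectProperty.lift _ (powersDiagram f s) fun t => ofList_le_radical_ofList_pow f s (unop t)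

theorem initial_powersToSelfLERadical [IsNoetherianRing R] :
    (powersToSelfLERadical f s).Initial where
  out J := by
    obtain ⟨t, ht⟩ := Ideal.exists_pow_le_of_le_radical_of_fg J.2 (IsNoetherian.noetherian _)
    have : Nonempty (CostructuredArrow (powersToSelfLERadical f s) J) :=
      ⟨CostructuredArrow.mk
        (⟨⟨⟨(ofList_pow_le_pow_ofList f s t).trans ht⟩⟩⟩ :
          (powersToSelfLERadical f s).obj (op t) ⟶ J)⟩
    refine zigzag_isConnected fun j₁ j₂ => Relation.ReflTransGen.single ?_
    rcases le_total (unop j₁.left) (unop j₂.left) with h | h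
    · exact Or.inr ⟨CostructuredArrow.homMk (homOfLE h).op rfl⟩
    · exact Or.inl ⟨CostructuredArrow.homMk (homOfLE h).op rfl⟩

/-- Local cohomology with support in `(f i)_{i ∈ s}`, computed from the ideals of powers. -/
noncomputable def powersIso [IsNoetherianRing R] (i : ℕ) :
    colimit (localCohomology.diagram (powersDiagram f s) i) ≅
      localCohomology (Ideal.ofList (s.map f)) i :=
  have := initial_powersToSelfLERadical f s
  HasColimit.isoOfNatIso (Iso.refl _) ≪≫
    localCohomology.isoOfFinal.{u, u, 0} (powersToSelfLERadical f s)
      (localCohomology.selfLERadicalDiagram _) i ≪≫ localCohomology.isoSelfLERadical _ i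

variable {f s}

theorem diagram_map_koszulExt (h : ∀ t, IsWeaklyRegular R (s.map (f ^ t)).reverse)
    (Y : ModuleCat.{u} R) {t u : ℕ} (φ : op (op t) ⟶ op (op (t + u))) (y : Y) :
    ((localCohomology.diagram (powersDiagram f s) s.length).map φ).app Y
      (AugComplex.koszulExt (h t) Y y) =
        AugComplex.koszulExt (h (t + u)) Y ((s.map f).prod ^ u • y) :=
  (AugComplex.map_koszulExt (h t) (h (t + u)) (fun i => pow_add (f i) t u)
    (antitone_ofList_pow f s (Nat.le_add_right t u)) Y y).trans
      (congrArg (fun r => AugComplex.koszulExt (h (t + u)) Y (r • y))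
        (List.prod_map_hom s f (powMonoidHom u)))

/-- The class of an element of `Extˡ(R ⧸ J, Y)` in the colimit over the ideals `J` of powers. -/
noncomputable def extToColimit (f : ι → R) (s : List ι) (Y : ModuleCat.{u} R) (i t : ℕ) :
    ((localCohomology.diagram (powersDiagram f s) i).obj (op (op t))).obj Y →ₗ[R]
      (colimit (localCohomology.diagram (powersDiagram f s) i)).obj Y :=
  ((colimit.ι (localCohomology.diagram (powersDiagram f s) i) (op (op t))).app Y).hom

theorem extToColimit_map {Y : ModuleCat.{u} R} {i t u : ℕ} (φ : op (op t) ⟶ op (op u))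
    (z : ((localCohomology.diagram (powersDiagram f s) i).obj (op (op t))).obj Y) :
    extToColimit f s Y i u (((localCohomology.diagram (powersDiagram f s) i).map φ).app Y z) =
      extToColimit f s Y i t z :=
  ConcreteCategory.congr_hom (congrArg (fun c => c.app Y)
    (colimit.w (localCohomology.diagram (powersDiagram f s) i) φ)) z

/-- Evaluation at a module preserves the colimit defining local cohomology. -/
noncomputable def isColimitEvaluation (f : ι → R) (s : List ι) (Y : ModuleCat.{u} R) (i : ℕ) :
    IsColimit (((evaluation (ModuleCat.{u} R) (ModuleCat.{u} R)).obj Y).mapCocone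
      (colimit.cocone (localCohomology.diagram (powersDiagram f s) i))) :=
  isColimitOfPreserves ((evaluation (ModuleCat.{u} R) (ModuleCat.{u} R)).obj Y)
    (colimit.isColimit (localCohomology.diagram (powersDiagram f s) i))

theorem exists_extToColimit_eq {Y : ModuleCat.{u} R} {i : ℕ}
    (z : (colimit (localCohomology.diagram (powersDiagram f s) i)).obj Y) :
    ∃ t y, extToColimit f s Y i t y = z := by
  have := preservesFilteredColimitsOfSize_shrink.{0, u, 0, u} (forget (ModuleCat.{u} R))
  obtain ⟨j, y, hy⟩ := Concrete.isColimit_exists_rep _ (isColimitEvaluation f s Y i) z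
  exact ⟨unop (unop j), y, hy⟩

theorem exists_map_eq_zero_of_extToColimit_eq_zero {Y : ModuleCat.{u} R} {i t : ℕ}
    {z : ((localCohomology.diagram (powersDiagram f s) i).obj (op (op t))).obj Y}
    (hz : extToColimit f s Y i t z = 0) :
    ∃ u, ∃ φ : op (op t) ⟶ op (op (t + u)),
      ((localCohomology.diagram (powersDiagram f s) i).map φ).app Y z = 0 := by
  have := preservesFilteredColimitsOfSize_shrink.{0, u, 0, u} (forget (ModuleCat.{u} R))
  obtain ⟨j, φ, ψ, e⟩ := Concrete.isColimit_exists_of_rep_eq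
    (localCohomology.diagram (powersDiagram f s) i ⋙
      (evaluation (ModuleCat.{u} R) (ModuleCat.{u} R)).obj Y)
    (isColimitEvaluation f s Y i) (i := op (op t)) (j := op (op t)) z 0
    (hz.trans (map_zero (extToColimit f s Y i t)).symm)
  obtain ⟨u, hu⟩ := Nat.exists_eq_add_of_le φ.unop.unop.down.down
  obtain rfl : j = op (op (t + u)) := by rw [← hu]
  exact ⟨u, φ, e.trans (map_zero _)⟩

theorem isFractionSystem_extToColimit (h : ∀ t, IsWeaklyRegular R (s.map (f ^ t)).reverse)
    (Y : ModuleCat.{u} R) :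
    IsFractionSystem f s fun t =>
      extToColimit f s Y s.length t ∘ₗ AugComplex.koszulExt (h t) Y where
  exists_eq z := by
    obtain ⟨t, y, rfl⟩ := exists_extToColimit_eq z
    obtain ⟨m, rfl⟩ := AugComplex.koszulExt_surjective (h t) Y y
    exact ⟨t, m, rfl⟩
  add_smul t u m :=
    (congrArg (extToColimit f s Y s.length (t + u)) (diagram_map_koszulExt h Y
      (homOfLE (Nat.le_add_right t u)).op.op m).symm).trans (extToColimit_map _ _)
  eq_zero_iff t m := by
    simp only [← AugComplex.koszulExt_eq_zero_iff (h _) Y]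
    constructor
    · intro e
      obtain ⟨u, φ, hφ⟩ := exists_map_eq_zero_of_extToColimit_eq_zero e
      exact ⟨u, (diagram_map_koszulExt h Y φ m).symm.trans hφ⟩
    · rintro ⟨u, hu⟩
      let φ : op (op t) ⟶ op (op (t + u)) := (homOfLE (Nat.le_add_right t u)).op.op
      refine (extToColimit_map φ _).symm.trans ?_
      exact (congrArg (extToColimit f s Y s.length (t + u))
        ((diagram_map_koszulExt h Y φ m).trans hu)).trans (map_zero _)

theorem IsFractionSystem.comp_linearEquiv {M H H' : Type*} [AddCommGroup M] [Module R M]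
    [AddCommGroup H] [Module R H] [AddCommGroup H'] [Module R H'] {frac : ℕ → M →ₗ[R] H}
    (hfrac : IsFractionSystem f s frac) (e : H ≃ₗ[R] H') :
    IsFractionSystem f s fun t => e.toLinearMap ∘ₗ frac t where
  exists_eq z := by
    obtain ⟨t, m, hm⟩ := hfrac.exists_eq (e.symm z)
    exact ⟨t, m, (congrArg e hm).trans (e.apply_symm_apply z)⟩
  add_smul t u m := congrArg e (hfrac.add_smul t u m)
  eq_zero_iff t m := (e.map_eq_zero_iff (x := frac t m)).trans (hfrac.eq_zero_iff t m)

theorem exists_isFractionSystem_localCohomology [IsNoetherianRing R]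
    (h : ∀ t, IsWeaklyRegular R (s.map (f ^ t)).reverse) (Y : ModuleCat.{u} R) {I : Ideal R} {l : ℕ}
    (hI : Ideal.ofList (s.map f) = I) (hl : s.length = l) :
    ∃ frac : ℕ → Y →ₗ[R] (localCohomology I l).obj Y, IsFractionSystem f s frac := by
  subst hI hl
  exact ⟨_, (isFractionSystem_extToColimit h Y).comp_linearEquiv
    (((powersIso f s s.length).app Y).toLinearEquiv)⟩

end Fractions

section Laurent

variable {σ : Type v} {k : Type u} [CommRing k]

theorem mem_ofList_map_X_pow {s : List σ} {t : ℕ} {r : MvPolynomial σ k} :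
    r ∈ Ideal.ofList (s.map (X ^ t)) ↔ ∀ m ∈ r.support, ∃ i ∈ s, t ≤ m i := by
  have hset : {r : MvPolynomial σ k | r ∈ s.map (X ^ t)} =
      (fun m => monomial m 1) '' ((Finsupp.single · t) '' {i | i ∈ s}) := by
    ext r
    simp [X_pow_eq_monomial]
  rw [Ideal.ofList, hset, mem_ideal_span_monomial_image]
  simp only [Set.exists_mem_image, Set.mem_ofPred_eq, Finsupp.single_le_iff]

theorem monomial_mul_mem_ofList_map_X_pow {s : List σ} {t : ℕ} {p : σ →₀ ℕ}
    {r : MvPolynomial σ k} :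
    monomial p 1 * r ∈ Ideal.ofList (s.map (X ^ t)) ↔
      ∀ m ∈ r.support, ∃ i ∈ s, t ≤ p i + m i := by
  rw [mem_ofList_map_X_pow]
  constructor
  · intro h m hm
    exact h (p + m) (by rwa [mem_support_iff, coeff_monomial_mul, one_mul, ← mem_support_iff])
  · intro h m hm
    rw [mem_support_iff, coeff_monomial_mul', ne_eq, ite_eq_right_iff, Classical.not_imp,
      one_mul, ← ne_eq, ← mem_support_iff] at hm
    obtain ⟨i, hi, hti⟩ := h _ hm.2
    refine ⟨i, hi, hti.trans_eq ?_⟩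
    rw [← Finsupp.add_apply, add_tsub_cancel_of_le hm.1]

theorem isWeaklyRegular_map_X_pow {s : List σ} (hs : s.Nodup) (t : ℕ) :
    IsWeaklyRegular (MvPolynomial σ k) (s.map (X ^ t : σ → MvPolynomial σ k)) := by
  refine (isWeaklyRegular_iff _ _).2 fun j hj => ?_
  rw [isSMulRegular_quotient_iff_mem_of_smul_mem, ← List.map_take, smul_eq_mul, Ideal.mul_top]
  intro r hr
  rw [List.length_map] at hj
  rw [List.getElem_map, Pi.pow_apply, X_pow_eq_monomial, smul_eq_mul,
    monomial_mul_mem_ofList_map_X_pow] at hr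
  refine mem_ofList_map_X_pow.2 fun m hm => ?_
  obtain ⟨_, hi, hti⟩ := hr m hm
  obtain ⟨i, hij, rfl⟩ := List.mem_take_iff_getElem.1 hi
  have hne : s[i] ≠ s[j] := fun e => (lt_min_iff.1 hij).1.ne (hs.getElem_inj_iff.1 e)
  rw [Finsupp.single_eq_of_ne hne, zero_add] at hti
  exact ⟨_, hi, hti⟩

/-- The degrees in which the top local cohomology of `k[xᵢ]` with support in `(xᵢ)_{i ∈ S}` is
nonzero. -/
def orthant (S : Finset σ) : Set (σ → ℤ) := {d | ∀ i, d i < 0 ↔ i ∈ S}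

variable (k) in
/-- `E d` behaves as the Laurent monomial `x ^ d` in `k[xᵢ, xⱼ⁻¹ : j ∈ S]` modulo those monomials
in which some `xⱼ`, `j ∈ S`, has a nonnegative exponent. -/
structure IsLaurentBasis (S : Finset σ) {M : Type*} [AddCommGroup M]
    [Module (MvPolynomial σ k) M] [Module k M] (E : (σ → ℤ) → M) : Prop where
  eq_zero_of_notMem {d : σ → ℤ} : d ∉ orthant S → E d = 0
  linearIndepOn : LinearIndepOn k E (orthant S)
  span_range : Submodule.span k (Set.range E) = ⊤
  monomial_smul {d : σ → ℤ} (hd : d ∈ orthant S) (p : σ →₀ ℕ) :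
    monomial p (1 : k) • E d = E (d + fun i => (p i : ℤ))

theorem prod_map_X_pow (S : Finset σ) (t : ℕ) :
    (S.toList.map (X : σ → MvPolynomial σ k)).prod ^ t =
      monomial (∑ i ∈ S, Finsupp.single i t) 1 := by
  rw [Finset.prod_map_toList, ← Finset.prod_pow, monomial_sum_one]
  exact Finset.prod_congr rfl fun i _ => X_pow_eq_monomial

theorem IsFractionSystem.frac_add_monomial {S : Finset σ} {H : Type*} [AddCommGroup H]
    [Module (MvPolynomial σ k) H] {frac : ℕ → MvPolynomial σ k →ₗ[MvPolynomial σ k] H}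
    (h : IsFractionSystem X S.toList frac) (t u : ℕ) (m : σ →₀ ℕ) :
    frac (t + u) (monomial ((∑ i ∈ S, Finsupp.single i u) + m) 1) = frac t (monomial m 1) := by
  rw [← h.add_smul t u, prod_map_X_pow, smul_eq_mul, monomial_mul, one_mul]

theorem sum_single_apply [DecidableEq σ] (S : Finset σ) (t : ℕ) (i : σ) :
    (∑ j ∈ S, Finsupp.single j t) i = if i ∈ S then t else 0 := by
  simp [Finsupp.finsetSum_apply, Finsupp.single_apply]

theorem IsFractionSystem.X_eq_zero_iff {S : Finset σ} {H : Type*} [AddCommGroup H]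
    [Module (MvPolynomial σ k) H] {frac : ℕ → MvPolynomial σ k →ₗ[MvPolynomial σ k] H}
    (h : IsFractionSystem X S.toList frac) {t : ℕ} {r : MvPolynomial σ k} :
    frac t r = 0 ↔ ∀ m ∈ r.support, ∃ i ∈ S, t ≤ m i := by
  classical
  rw [h.eq_zero_iff]
  simp only [prod_map_X_pow, smul_eq_mul, Ideal.mul_top, monomial_mul_mem_ofList_map_X_pow,
    Finset.mem_toList, sum_single_apply]
  constructor
  · rintro ⟨u, hu⟩ m hm
    obtain ⟨i, hi, hti⟩ := hu m hm
    rw [if_pos hi] at hti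
    exact ⟨i, hi, by omega⟩
  · intro ht
    refine ⟨0, fun m hm => ?_⟩
    obtain ⟨i, hi, hti⟩ := ht m hm
    exact ⟨i, hi, by simpa using hti⟩

variable [DecidableEq σ]

/-- The degree of the fraction `x ^ m / (∏_{i ∈ S} xᵢ) ^ t`, encoded as the pair `(t, m)`. -/
def fractionDegree (S : Finset σ) (q : ℕ × (σ →₀ ℕ)) : σ → ℤ :=
  fun i => q.2 i - if i ∈ S then (q.1 : ℤ) else 0

theorem eventually_exists_fractionDegree_eq [Finite σ] {S : Finset σ} {d : σ → ℤ}
    (hd : d ∈ orthant S) : ∀ᶠ t in Filter.atTop, ∃ m, fractionDegree S (t, m) = d := by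
  have hbound : ∀ᶠ t : ℕ in Filter.atTop, ∀ i, -d i ≤ t :=
    Filter.eventually_all.2 fun i => by
      filter_upwards [Filter.eventually_ge_atTop (-d i).toNat] with t ht
      exact Int.toNat_le.1 ht
  filter_upwards [hbound] with t ht
  refine ⟨Finsupp.equivFunOnFinite.symm fun i => (d i + if i ∈ S then (t : ℤ) else 0).toNat, ?_⟩
  ext i
  have := hd i
  have := ht i
  simp only [fractionDegree, Finsupp.equivFunOnFinite_symm_apply_apply]
  split_ifs <;> grind

namespace IsFractionSystem

variable {S : Finset σ} {H : Type*} [AddCommGroup H] [Module (MvPolynomial σ k) H]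
  {frac : ℕ → MvPolynomial σ k →ₗ[MvPolynomial σ k] H}

theorem frac_monomial_factorsThrough (h : IsFractionSystem X S.toList frac) :
    (fun q : ℕ × (σ →₀ ℕ) => frac q.1 (monomial q.2 1)).FactorsThrough (fractionDegree S) := by
  rintro ⟨t, m⟩ ⟨t', m'⟩ e
  have hadd : (∑ i ∈ S, Finsupp.single i t') + m = (∑ i ∈ S, Finsupp.single i t) + m' := by
    ext i
    have hi := congrFun e i
    simp only [fractionDegree] at hi
    rw [Finsupp.add_apply, Finsupp.add_apply, sum_single_apply, sum_single_apply]
    split_ifs at hi ⊢ <;> omega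
  change frac t _ = frac t' _
  rw [← h.frac_add_monomial t t', ← h.frac_add_monomial t' t, hadd, add_comm t']

/-- The fraction `x ^ d` of degree `d`, and zero if there is none. -/
noncomputable def laurentMonomial (S : Finset σ)
    (frac : ℕ → MvPolynomial σ k →ₗ[MvPolynomial σ k] H) : (σ → ℤ) → H :=
  Function.extend (fractionDegree S) (fun q => frac q.1 (monomial q.2 1)) 0

theorem laurentMonomial_fractionDegree (h : IsFractionSystem X S.toList frac) (t : ℕ)
    (m : σ →₀ ℕ) : laurentMonomial S frac (fractionDegree S (t, m)) = frac t (monomial m 1) :=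
  h.frac_monomial_factorsThrough.extend_apply 0 (t, m)

theorem laurentMonomial_eq_zero (h : IsFractionSystem X S.toList frac) {d : σ → ℤ}
    (hd : d ∉ orthant S) : laurentMonomial S frac d = 0 := by
  by_cases hq : ∃ q, fractionDegree S q = d
  · obtain ⟨⟨t, m⟩, rfl⟩ := hq
    rw [h.laurentMonomial_fractionDegree, h.X_eq_zero_iff]
    intro m' hm'
    obtain rfl := Finset.mem_singleton.1 (support_monomial_subset hm')
    simp only [orthant, fractionDegree, Set.mem_ofPred_eq, not_forall] at hd
    obtain ⟨i, hi⟩ := hd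
    split_ifs at hi <;> grind
  · exact Function.extend_apply' _ _ _ hq

theorem monomial_smul_laurentMonomial [Finite σ] (h : IsFractionSystem X S.toList frac)
    {d : σ → ℤ} (hd : d ∈ orthant S) (p : σ →₀ ℕ) :
    monomial p (1 : k) • laurentMonomial S frac d =
      laurentMonomial S frac (d + fun i => (p i : ℤ)) := by
  obtain ⟨t, m, rfl⟩ := (eventually_exists_fractionDegree_eq hd).exists
  have hadd : (fractionDegree S (t, m) + fun i => (p i : ℤ)) = fractionDegree S (t, p + m) := by
    ext i
    simp only [fractionDegree, Pi.add_apply, Finsupp.add_apply]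
    push_cast
    ring
  rw [hadd, h.laurentMonomial_fractionDegree, h.laurentMonomial_fractionDegree, ← map_smul,
    smul_eq_mul, monomial_mul, one_mul]

variable [Module k H] [IsScalarTower k (MvPolynomial σ k) H]

theorem frac_monomial (h : IsFractionSystem X S.toList frac) (t : ℕ) (m : σ →₀ ℕ) (c : k) :
    frac t (monomial m c) = c • laurentMonomial S frac (fractionDegree S (t, m)) := by
  rw [h.laurentMonomial_fractionDegree, ← (frac t).map_smul_of_tower, smul_monomial, smul_eq_mul,
    mul_one]

theorem span_range_laurentMonomial (h : IsFractionSystem X S.toList frac) :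
    Submodule.span k (Set.range (laurentMonomial S frac)) = ⊤ := by
  refine (Submodule.eq_top_iff').2 fun z => ?_
  obtain ⟨t, r, rfl⟩ := h.exists_eq z
  rw [r.as_sum, map_sum]
  refine Submodule.sum_mem _ fun m _ => ?_
  rw [h.frac_monomial]
  exact Submodule.smul_mem _ _ (Submodule.subset_span ⟨_, rfl⟩)

theorem linearIndepOn_laurentMonomial [Finite σ] (h : IsFractionSystem X S.toList frac) :
    LinearIndepOn k (laurentMonomial S frac) (orthant S) := by
  refine linearIndepOn_iff'.2 fun T c hT hsum d hd => ?_
  obtain ⟨t, ht⟩ := ((Filter.eventually_all_finset T).2 fun d hd =>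
    eventually_exists_fractionDegree_eq (hT hd)).exists
  choose! m hm using ht
  have hfrac : frac t (∑ d ∈ T, monomial (m d) (c d)) = 0 := by
    rw [map_sum, ← hsum]
    exact Finset.sum_congr rfl fun d hd => by rw [h.frac_monomial, hm d hd]
  by_contra hcd
  have hcoeff : coeff (m d) (∑ d ∈ T, monomial (m d) (c d)) = c d := by
    rw [coeff_sum, Finset.sum_eq_single_of_mem d hd, coeff_monomial, if_pos rfl]
    intro d' hd' hne
    rw [coeff_monomial, if_neg]
    exact fun e => hne (by rw [← hm d' hd', ← hm d hd, e])
  obtain ⟨i, hi, hti⟩ := h.X_eq_zero_iff.1 hfrac (m d) (by rwa [mem_support_iff, hcoeff])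
  have hneg := (hT hd i).2 hi
  rw [← hm d hd, fractionDegree, if_pos hi] at hneg
  exact hneg.not_ge (by simpa using hti)

theorem isLaurentBasis [Finite σ] (h : IsFractionSystem X S.toList frac) :
    IsLaurentBasis k S (laurentMonomial S frac) where
  eq_zero_of_notMem := h.laurentMonomial_eq_zero
  linearIndepOn := h.linearIndepOn_laurentMonomial
  span_range := h.span_range_laurentMonomial
  monomial_smul := h.monomial_smul_laurentMonomial

end IsFractionSystem

end Laurent

section GradedHom

variable {σ : Type v} {k : Type u} [CommRing k] {M : Type*} [AddCommGroup M]
  [Module (MvPolynomial σ k) M] [Module k M]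

/-- A homomorphism `M ^ ι → M ^ κ` is graded for a grading `g` of `M` when it maps vectors
with entries of degree `d` to vectors with entries of degree `d`. -/
def IsGradedHom (g : (σ → ℤ) → Submodule k M) {ι κ : Type*}
    (f : (ι → M) →ₗ[MvPolynomial σ k] (κ → M)) : Prop :=
  ∀ d v, (∀ t, v t ∈ g d) → ∀ t, f v t ∈ g d

theorem exists_add_eq_of_mem_orthant [Finite σ] {S : Finset σ} {a d : σ → ℤ}
    (ha : a ∈ orthant S) (hd : d ∈ orthant S) :
    ∃ b ∈ orthant S, ∃ p q : σ →₀ ℕ,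
      (b + fun i => (p i : ℤ)) = a ∧ (b + fun i => (q i : ℤ)) = d := by
  refine ⟨a ⊓ d, fun i => ?_, Finsupp.equivFunOnFinite.symm fun i => (a i - (a ⊓ d) i).toNat,
    Finsupp.equivFunOnFinite.symm fun i => (d i - (a ⊓ d) i).toNat, ?_, ?_⟩
  · rw [Pi.inf_apply, inf_lt_iff, ha i, hd i, or_self]
  all_goals
    ext i
    simp only [Pi.add_apply, Pi.inf_apply, Finsupp.equivFunOnFinite_symm_apply_apply]
    omega

theorem exists_matrix_of_linearMap_pi_span_singleton {k M ι κ : Type*} [CommRing k]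
    [AddCommGroup M] [Module k M] [Fintype ι] {x : M}
    (φ : Submodule.pi Set.univ (fun _ : ι => Submodule.span k {x}) →ₗ[k]
      Submodule.pi Set.univ (fun _ : κ => Submodule.span k {x})) :
    ∃ A : Matrix κ ι k, ∀ v j, (φ v : κ → M) j = ∑ i, A j i • (v : ι → M) i := by
  classical
  let e (i : ι) : Submodule.pi Set.univ (fun _ : ι => Submodule.span k {x}) :=
    ⟨Pi.single i x, fun j _ => by
      rcases eq_or_ne j i with rfl | hji
      · rw [Pi.single_eq_same]; exact Submodule.mem_span_singleton_self x
      · rw [Pi.single_eq_of_ne hji]; exact zero_mem _⟩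
  choose A hA using fun j i => Submodule.mem_span_singleton.1 ((φ (e i)).2 j trivial)
  refine ⟨Matrix.of A, fun v j => ?_⟩
  choose c hc using fun i => Submodule.mem_span_singleton.1 (v.2 i trivial)
  have hv : v = ∑ i, c i • e i := by
    ext j
    simp [e, Finset.sum_apply, Pi.single_apply, hc]
  calc (φ v : κ → M) j = ∑ i, c i • (φ (e i) : κ → M) j := by
        conv_lhs => rw [hv]
        simp [Finset.sum_apply]
    _ = ∑ i, A j i • (v : ι → M) i := Finset.sum_congr rfl fun i _ => by
        rw [← hA, ← hc, smul_comm]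

namespace IsGradedHom

variable {g : (σ → ℤ) → Submodule k M} {ι κ ν : Type*}

theorem comp {f' : (κ → M) →ₗ[MvPolynomial σ k] (ν → M)}
    {f : (ι → M) →ₗ[MvPolynomial σ k] (κ → M)} (hf' : IsGradedHom g f') (hf : IsGradedHom g f) :
    IsGradedHom g (f'.comp f) :=
  fun d v hv => hf' d (f v) (hf d v hv)

theorem sub {f₁ f₂ : (ι → M) →ₗ[MvPolynomial σ k] (κ → M)} (h₁ : IsGradedHom g f₁)
    (h₂ : IsGradedHom g f₂) : IsGradedHom g (f₁ - f₂) :=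
  fun d v hv t => sub_mem (h₁ d v hv t) (h₂ d v hv t)

theorem sum_smul_proj [IsScalarTower k (MvPolynomial σ k) M] [Fintype ι] (A : Matrix κ ι k) :
    IsGradedHom g (LinearMap.pi fun j =>
      ∑ i, A j i • (LinearMap.proj i : (ι → M) →ₗ[MvPolynomial σ k] M)) := by
  intro d v hv j
  rw [LinearMap.pi_apply, LinearMap.sum_apply]
  exact sum_mem fun i _ => Submodule.smul_mem _ _ (hv i)

theorem exists_eq_of_linearMap [IsScalarTower k (MvPolynomial σ k) M] [Finite ι] {x : M}
    (φ : Submodule.pi Set.univ (fun _ : ι => Submodule.span k {x}) →ₗ[k]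
      Submodule.pi Set.univ (fun _ : κ => Submodule.span k {x})) :
    ∃ f : (ι → M) →ₗ[MvPolynomial σ k] (κ → M), IsGradedHom g f ∧ ∀ v hv, f v = φ ⟨v, hv⟩ := by
  cases nonempty_fintype ι
  obtain ⟨A, hA⟩ := exists_matrix_of_linearMap_pi_span_singleton φ
  refine ⟨_, sum_smul_proj A, fun v hv => funext fun j => ?_⟩
  rw [hA, LinearMap.pi_apply, LinearMap.sum_apply]
  rfl

end IsGradedHom

namespace IsLaurentBasis

variable {S : Finset σ} {E : (σ → ℤ) → M}

theorem iSupIndep_span (h : IsLaurentBasis k S E) :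
    iSupIndep fun d => Submodule.span k {E d} := by
  rw [← iSupIndep_ne_bot]
  have hmem (d : {d // Submodule.span k {E d} ≠ ⊥}) : d.1 ∈ orthant S := by
    by_contra hd
    exact d.2 (by rw [h.eq_zero_of_notMem hd, Submodule.span_zero_singleton])
  exact h.linearIndepOn.linearIndependent.iSupIndep_span_singleton.comp
    (f := fun d : {d // Submodule.span k {E d} ≠ ⊥} => (⟨d.1, hmem d⟩ : orthant S))
    fun _ _ e => Subtype.ext (congrArg (fun d : orthant S => d.1) e)

theorem isInternal [DecidableEq (σ → ℤ)] (h : IsLaurentBasis k S E) :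
    DirectSum.IsInternal fun d => Submodule.span k {E d} := by
  refine DirectSum.isInternal_submodule_of_iSupIndep_of_iSup_eq_top h.iSupIndep_span ?_
  rw [← Submodule.span_range_eq_iSup, h.span_range]

theorem smul_eq_zero_iff (h : IsLaurentBasis k S E) {d : σ → ℤ} (hd : d ∈ orthant S) {c : k} :
    c • E d = 0 ↔ c = 0 := by
  refine ⟨fun hc => ?_, fun hc => by rw [hc, zero_smul]⟩
  exact linearIndepOn_iff'.1 h.linearIndepOn {d} (fun _ => c) (by simpa using hd)
    (by simpa using hc) d (Finset.mem_singleton_self d)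

theorem finrank_span [Nontrivial k] [DecidablePred (· ∈ orthant S)] (h : IsLaurentBasis k S E)
    (d : σ → ℤ) : Module.finrank k (Submodule.span k {E d}) = if d ∈ orthant S then 1 else 0 := by
  split_ifs with hd
  · have hind : LinearIndependent k fun _ : Unit => E d :=
      h.linearIndepOn.linearIndependent.comp (fun _ => (⟨d, hd⟩ : orthant S))
        (Function.injective_of_subsingleton _)
    rw [← Set.range_const (ι := Unit), finrank_span_eq_card hind, Fintype.card_unit]
  · rw [h.eq_zero_of_notMem hd, Submodule.span_zero_singleton, finrank_bot]

variable [IsScalarTower k (MvPolynomial σ k) M]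

theorem monomial_smul_smul (h : IsLaurentBasis k S E) {d : σ → ℤ} (hd : d ∈ orthant S)
    (p : σ →₀ ℕ) (c : k) :
    monomial p (1 : k) • c • E d = c • E (d + fun i => (p i : ℤ)) := by
  rw [smul_comm, h.monomial_smul hd]

theorem X_smul_mem [DecidableEq σ] (h : IsLaurentBasis k S E) (i : σ) (d : σ → ℤ) {z : M}
    (hz : z ∈ Submodule.span k {E d}) :
    (X i : MvPolynomial σ k) • z ∈ Submodule.span k {E (d + Pi.single i 1)} := by
  obtain ⟨c, rfl⟩ := Submodule.mem_span_singleton.1 hz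
  by_cases hd : d ∈ orthant S
  · have hsingle : (fun j => ((Finsupp.single i 1 j : ℕ) : ℤ)) = Pi.single i 1 := by
      ext j
      simp [Finsupp.single_apply, Pi.single_apply, eq_comm]
    rw [X, h.monomial_smul_smul hd, hsingle]
    exact Submodule.smul_mem _ _ (Submodule.mem_span_singleton_self _)
  · rw [h.eq_zero_of_notMem hd, smul_zero, smul_zero]
    exact zero_mem _

theorem eq_zero_of_monomial_smul_eq_zero (h : IsLaurentBasis k S E) {d : σ → ℤ} {p : σ →₀ ℕ}
    (hd : d ∈ orthant S) (hdp : (d + fun i => (p i : ℤ)) ∈ orthant S) {z : M}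
    (hz : z ∈ Submodule.span k {E d}) (hpz : monomial p (1 : k) • z = 0) : z = 0 := by
  obtain ⟨c, rfl⟩ := Submodule.mem_span_singleton.1 hz
  rw [h.monomial_smul_smul hd, h.smul_eq_zero_iff hdp] at hpz
  rw [hpz, zero_smul]

theorem hom_ext {N ι : Type*} [AddCommGroup N] [Module (MvPolynomial σ k) N] [Finite ι]
    [DecidableEq ι] (h : IsLaurentBasis k S E) {f₁ f₂ : (ι → M) →ₗ[MvPolynomial σ k] N}
    (hf : ∀ i, ∀ d ∈ orthant S, f₁ (Pi.single i (E d)) = f₂ (Pi.single i (E d))) : f₁ = f₂ := by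
  refine LinearMap.pi_ext fun i z => ?_
  have hz : z ∈ Submodule.span k (Set.range E) := h.span_range ▸ Submodule.mem_top
  induction hz using Submodule.span_induction with
  | mem z hz =>
    obtain ⟨d, rfl⟩ := hz
    by_cases hd : d ∈ orthant S
    · exact hf i d hd
    · rw [h.eq_zero_of_notMem hd, Pi.single_zero, map_zero, map_zero]
  | zero => rw [Pi.single_zero, map_zero, map_zero]
  | add y z _ _ hy hz => rw [Pi.single_add, map_add, map_add, hy, hz]
  | smul c z _ hz =>
    rw [← algebraMap_smul (MvPolynomial σ k) c z, Pi.single_smul, map_smul, map_smul, hz]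

theorem gradedHom_ext [Finite σ] {ι κ : Type*} [Finite ι] (h : IsLaurentBasis k S E) {a : σ → ℤ}
    (ha : a ∈ orthant S) {f₁ f₂ : (ι → M) →ₗ[MvPolynomial σ k] (κ → M)}
    (h₁ : IsGradedHom (fun d => Submodule.span k {E d}) f₁)
    (h₂ : IsGradedHom (fun d => Submodule.span k {E d}) f₂)
    (heq : ∀ v, (∀ t, v t ∈ Submodule.span k {E a}) → f₁ v = f₂ v) : f₁ = f₂ := by
  classical
  have hsingle (i : ι) (d : σ → ℤ) (t : ι) :
      (Pi.single i (E d) : ι → M) t ∈ Submodule.span k {E d} := by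
    rcases eq_or_ne t i with rfl | hti
    · rw [Pi.single_eq_same]; exact Submodule.mem_span_singleton_self _
    · rw [Pi.single_eq_of_ne hti]; exact zero_mem _
  refine h.hom_ext fun i d hd => sub_eq_zero.1 ?_
  obtain ⟨b, hb, p, q, rfl, rfl⟩ := exists_add_eq_of_mem_orthant ha hd
  have hmul (r : σ →₀ ℕ) : (f₁ - f₂) (Pi.single i (E (b + fun i => (r i : ℤ)))) =
      monomial r (1 : k) • (f₁ - f₂) (Pi.single i (E b)) := by
    rw [← h.monomial_smul hb, Pi.single_smul, map_smul]
  have hzero : (f₁ - f₂) (Pi.single i (E b)) = 0 := by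
    ext j
    refine h.eq_zero_of_monomial_smul_eq_zero hb ha (h₁.sub h₂ b _ (hsingle i b) j) ?_
    rw [← Pi.smul_apply, ← hmul, LinearMap.sub_apply, heq _ (hsingle i _), sub_self, Pi.zero_apply]
  rw [← LinearMap.sub_apply, hmul, hzero, smul_zero]

end IsLaurentBasis

end GradedHom

section Main

variable {σ : Type v}

instance [Fintype σ] [DecidableEq σ] (S : Finset σ) : DecidablePred (· ∈ orthant S) :=
  fun d => inferInstanceAs (Decidable (∀ i, d i < 0 ↔ i ∈ S))

/-- The `R`-module `H^l_I(R)` for `R = k[xᵢ : i ∈ σ]`. -/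
noncomputable abbrev PolynomialLC {k : Type u} [CommRing k] (I : Ideal (MvPolynomial σ k)) (l : ℕ) :
    ModuleCat.{max u v} (MvPolynomial σ k) :=
  (localCohomology I l).obj (ModuleCat.of _ (MvPolynomial σ k))

theorem exists_isLaurentBasis_polynomialLC [Finite σ] {k : Type u} [CommRing k]
    [IsNoetherianRing k] {S : Finset σ} {I : Ideal (MvPolynomial σ k)} {l : ℕ}
    (hI : Ideal.span (X '' (S : Set σ)) = I) (hl : S.card = l)
    [Module k (PolynomialLC I l)] [IsScalarTower k (MvPolynomial σ k) (PolynomialLC I l)] :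
    ∃ E : (σ → ℤ) → PolynomialLC I l, IsLaurentBasis k S E := by
  classical
  have hreg (t : ℕ) :
      IsWeaklyRegular (MvPolynomial σ k) (S.toList.map (X ^ t : σ → MvPolynomial σ k)).reverse := by
    rw [← List.map_reverse]
    exact isWeaklyRegular_map_X_pow (List.nodup_reverse.2 S.nodup_toList) t
  have hlist : Ideal.ofList (S.toList.map X) = I := by
    rw [← hI, Ideal.ofList]
    congr 1
    ext r
    simp
  obtain ⟨frac, hfrac⟩ := exists_isFractionSystem_localCohomology hreg
    (ModuleCat.of _ (MvPolynomial σ k)) hlist (S.length_toList.trans hl)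
  exact ⟨_, hfrac.isLaurentBasis⟩

theorem stmt_5_general [Fintype σ] [DecidableEq σ] {k : Type u} [CommRing k] [Nontrivial k]
    [IsNoetherianRing k] {S : Finset σ} {I : Ideal (MvPolynomial σ k)} {l : ℕ}
    (hI : Ideal.span (X '' (S : Set σ)) = I) (hl : S.card = l) {a : σ → ℤ} (ha : a ∈ orthant S)
    (ι κ ν : Type*) [Finite ι]
    [Module k (PolynomialLC I l)] [IsScalarTower k (MvPolynomial σ k) (PolynomialLC I l)] :
    ∃ g : (σ → ℤ) → Submodule k (PolynomialLC I l),
      DirectSum.IsInternal g ∧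
      (∀ i d, ∀ m ∈ g d, (X i : MvPolynomial σ k) • m ∈ g (d + Pi.single i 1)) ∧
      (∀ d, Module.finrank k (g d) = if d ∈ orthant S then 1 else 0) ∧
      (∀ f₁ f₂ : (ι → PolynomialLC I l) →ₗ[MvPolynomial σ k] (κ → PolynomialLC I l),
        IsGradedHom g f₁ → IsGradedHom g f₂ →
        (∀ v, (∀ t, v t ∈ g a) → f₁ v = f₂ v) → f₁ = f₂) ∧
      (∀ φ : ↥(Submodule.pi Set.univ fun _ : ι => g a) →ₗ[k]
          ↥(Submodule.pi Set.univ fun _ : κ => g a),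
        ∃ f : (ι → PolynomialLC I l) →ₗ[MvPolynomial σ k] (κ → PolynomialLC I l),
          IsGradedHom g f ∧ ∀ v hv, f v = φ ⟨v, hv⟩) ∧
      (∀ (f : (ι → PolynomialLC I l) →ₗ[MvPolynomial σ k] (κ → PolynomialLC I l))
          (f' : (κ → PolynomialLC I l) →ₗ[MvPolynomial σ k] (ν → PolynomialLC I l)),
        IsGradedHom g f → IsGradedHom g f' → IsGradedHom g (f'.comp f)) := by
  obtain ⟨E, hE⟩ := exists_isLaurentBasis_polynomialLC (k := k) hI hl
  exact ⟨fun d => Submodule.span k {E d}, hE.isInternal, fun i d _ => hE.X_smul_mem i d,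
    hE.finrank_span, fun _ _ => hE.gradedHom_ext ha, IsGradedHom.exists_eq_of_linearMap,
    fun _ _ hf hf' => hf'.comp hf⟩

end Main

theorem mem_orthant_filter_iff {n : ℕ} {a : Fin n → ℤ} (ha : isOm a) (d : Fin n → ℤ) :
    d ∈ orthant {i | a i = -1} ↔ ∀ i, (a i = -1 → d i < 0) ∧ (a i = 0 → 0 ≤ d i) := by
  refine forall_congr' fun i => ?_
  rw [Finset.mem_filter_univ]
  have := ha i
  omega

/-- Linearization: for `M₁ = H^l_{p_a}(R)^{⊕k₁}`, `M₂ = H^l_{p_a}(R)^{⊕k₂}`, restriction of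
`ℤⁿ`-graded `R`-module homomorphisms `M₁ → M₂` to the degree-`a` components is a bijection
onto the `k`-linear maps `(M₁)_a → (M₂)_a`, and these restrictions are compatible with
composition (in particular composites of graded maps are graded). -/
theorem stmt_5 (n : ℕ) (k : Type) [Field k] (a : Fin n → ℤ) (ha : isOm a) (k₁ k₂ k₃ : ℕ)
    [Module k (LC k (faceIdeal k a) (wt a))]
    [IsScalarTower k (MvPolynomial (Fin n) k) (LC k (faceIdeal k a) (wt a))] :
    ∃ g : (Fin n → ℤ) → Submodule k (LC k (faceIdeal k a) (wt a)),
      DirectSum.IsInternal g ∧ GradingCompat k _ g ∧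
      (∀ d : Fin n → ℤ, Module.finrank k (g d) =
        if (∀ i, (a i = -1 → d i < 0) ∧ (a i = 0 → 0 ≤ d i)) then 1 else 0) ∧
      -- injectivity of the restriction map on graded homomorphisms
      (∀ f₁ f₂ : (Fin k₁ → LC k (faceIdeal k a) (wt a))
          →ₗ[MvPolynomial (Fin n) k] (Fin k₂ → LC k (faceIdeal k a) (wt a)),
        (∀ d : Fin n → ℤ, ∀ v, (∀ t, v t ∈ g d) → ∀ t, f₁ v t ∈ g d) →
        (∀ d : Fin n → ℤ, ∀ v, (∀ t, v t ∈ g d) → ∀ t, f₂ v t ∈ g d) →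
        (∀ v, (∀ t, v t ∈ g a) → f₁ v = f₂ v) → f₁ = f₂) ∧
      -- surjectivity: every `k`-linear map between the degree-`a` components
      -- is the restriction of a graded homomorphism
      (∀ φ : ↥(Submodule.pi Set.univ fun _ : Fin k₁ => g a)
          →ₗ[k] ↥(Submodule.pi Set.univ fun _ : Fin k₂ => g a),
        ∃ f : (Fin k₁ → LC k (faceIdeal k a) (wt a))
            →ₗ[MvPolynomial (Fin n) k] (Fin k₂ → LC k (faceIdeal k a) (wt a)),
          (∀ d : Fin n → ℤ, ∀ v, (∀ t, v t ∈ g d) → ∀ t, f v t ∈ g d) ∧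
          ∀ v (hv : v ∈ Submodule.pi Set.univ fun _ : Fin k₁ => g a),
            f v = (φ ⟨v, hv⟩ : Fin k₂ → LC k (faceIdeal k a) (wt a))) ∧
      -- compatibility with composition: composites of graded maps are graded
      (∀ (f : (Fin k₁ → LC k (faceIdeal k a) (wt a))
            →ₗ[MvPolynomial (Fin n) k] (Fin k₂ → LC k (faceIdeal k a) (wt a)))
         (f' : (Fin k₂ → LC k (faceIdeal k a) (wt a))
            →ₗ[MvPolynomial (Fin n) k] (Fin k₃ → LC k (faceIdeal k a) (wt a))),
        (∀ d : Fin n → ℤ, ∀ v, (∀ t, v t ∈ g d) → ∀ t, f v t ∈ g d) →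
        (∀ d : Fin n → ℤ, ∀ v, (∀ t, v t ∈ g d) → ∀ t, f' v t ∈ g d) →
        (∀ d : Fin n → ℤ, ∀ v, (∀ t, v t ∈ g d) → ∀ t, (f'.comp f) v t ∈ g d)) := by
  obtain ⟨g, hint, hcompat, hrank, hrest⟩ := stmt_5_general (I := faceIdeal k a) (l := wt a)
    (by simp [faceIdeal]) rfl ((mem_orthant_filter_iff ha a).2 fun i => ⟨by omega, by omega⟩)
    (Fin k₁) (Fin k₂) (Fin k₃)
  exact ⟨g, hint, hcompat, fun d =>
    (hrank d).trans (if_congr (mem_orthant_filter_iff ha d) rfl rfl), hrest⟩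
end
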